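/- arXiv:1912.05624 — 4 statements merged into one kernel-verified Lean document; each statement's English description precedes it below -/
import Mathlib

section
/- Let β > -1 and define J(x) = ∫_0^∞ e^{-η^2} η^β cos(xη) dη. Then there exists a constant C depending only on β such that |J(x)| ≤ C · min(1, |x|^{-(β+1)}) for all x ∈ ℝ. -/
open MeasureTheory Real Set

noncomputable def fR (β : ℝ) (η : ℝ) : ℝ := Real.exp (-η ^ 2) * η ^ β
noncomputable def gC (β x : ℝ) (η : ℝ) : ℂ := (fR β η : ℂ) * Complex.exp ((x * η : ℝ) * Complex.I)

lemma fR_nonneg (β η : ℝ) (h : 0 < η) : 0 ≤ fR β η := by unfold fR; positivity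

lemma fR_int (β : ℝ) (hβ : -1 < β) : IntegrableOn (fR β) (Ioi 0) := by
  have := integrableOn_rpow_mul_exp_neg_mul_sq (b := 1) one_pos hβ
  refine this.congr_fun (fun η _ => ?_) measurableSet_Ioi
  simp [fR, mul_comm]

lemma gC_norm (β x η : ℝ) (h : 0 < η) : ‖gC β x η‖ = fR β η := by
  unfold gC
  rw [norm_mul, Complex.norm_exp_ofReal_mul_I, mul_one, Complex.norm_real, Real.norm_of_nonneg (fR_nonneg β η h)]

lemma mul_exp_int (f : ℝ → ℝ) (x : ℝ) (s : Set ℝ) (hf : IntegrableOn f s) :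
    IntegrableOn (fun η => (f η : ℂ) * Complex.exp ((x * η : ℝ) * Complex.I)) s := by
  refine Integrable.mul_bdd (c := 1) hf.ofReal ?_ ?_
  · exact Continuous.aestronglyMeasurable (by fun_prop)
  · exact Filter.Eventually.of_forall fun η => (Complex.norm_exp_ofReal_mul_I _).le

lemma gC_int (β x : ℝ) (hβ : -1 < β) : IntegrableOn (gC β x) (Ioi 0) :=
  mul_exp_int _ _ _ (fR_int β hβ)

lemma gC_bdd (β x : ℝ) : ‖∫ η in Ioi (0:ℝ), gC β x η‖ ≤ ∫ η in Ioi (0:ℝ), fR β η := by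
  refine (norm_integral_le_integral_norm _).trans_eq ?_
  exact setIntegral_congr_fun measurableSet_Ioi fun η hη => gC_norm β x η hη

lemma fR_anti (β : ℝ) (hβ : β ≤ 0) (a b : ℝ) (ha : 0 < a) (hab : a ≤ b) : fR β b ≤ fR β a := by
  unfold fR
  have h1 : b ^ β ≤ a ^ β := Real.rpow_le_rpow_of_nonpos ha hab hβ
  have h2 : Real.exp (-b ^ 2) ≤ Real.exp (-a ^ 2) := by
    apply Real.exp_le_exp.2; nlinarith
  have : 0 ≤ b ^ β := Real.rpow_nonneg (ha.le.trans hab) _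
  gcongr

lemma fR_Ioc (β : ℝ) (hβ : -1 < β) (h : ℝ) (hh : 0 < h) :
    ∫ η in Ioc 0 h, fR β η ≤ h ^ (β + 1) / (β + 1) := by
  have e : ∫ η in Ioc 0 h, η ^ β = h ^ (β + 1) / (β + 1) := by
    rw [← intervalIntegral.integral_of_le hh.le, integral_rpow (Or.inl hβ),
      Real.zero_rpow (by linarith), sub_zero]
  rw [← e]
  refine setIntegral_mono_on ((fR_int β hβ).mono_set Ioc_subset_Ioi_self) ?_ measurableSet_Ioc ?_
  · exact (intervalIntegrable_iff_integrableOn_Ioc_of_le hh.le).1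
      (intervalIntegral.intervalIntegrable_rpow' hβ)
  · intro η hη
    unfold fR
    have : Real.exp (-η ^ 2) ≤ 1 := Real.exp_le_one_iff.2 (by nlinarith [sq_nonneg η])
    exact mul_le_of_le_one_left (Real.rpow_nonneg hη.1.le _) this

lemma shift_int {E : Type*} [NormedAddCommGroup E] [NormedSpace ℝ E] (f : ℝ → E) (h : ℝ) :
    ∫ η in Ioi (0:ℝ), f (η + h) = ∫ η in Ioi h, f η := by
  have := (measurePreserving_add_right (volume : Measure ℝ) h).setIntegral_preimage_emb
    (measurableEmbedding_addRight h) f (Ioi h)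
  simpa using this

lemma shift_integrable {E : Type*} [NormedAddCommGroup E] (f : ℝ → E) (h : ℝ)
    (hf : IntegrableOn f (Ioi h)) : IntegrableOn (fun η => f (η + h)) (Ioi 0) := by
  have := ((measurePreserving_add_right (volume : Measure ℝ) h).integrableOn_comp_preimage
    (measurableEmbedding_addRight h) (f := f) (s := Ioi h)).2 hf
  simpa [Function.comp_def] using this

lemma split_int {E : Type*} [NormedAddCommGroup E] [NormedSpace ℝ E] (f : ℝ → E) (h : ℝ)
    (hh : 0 < h) (hf : IntegrableOn f (Ioi 0)) :
    ∫ η in Ioi (0:ℝ), f η = (∫ η in Ioc 0 h, f η) + ∫ η in Ioi h, f η := by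
  rw [← Ioc_union_Ioi_eq_Ioi hh.le]
  exact setIntegral_union (Ioc_disjoint_Ioi le_rfl) measurableSet_Ioi
    (hf.mono_set Ioc_subset_Ioi_self) (hf.mono_set (Ioi_subset_Ioi hh.le))

lemma base (β : ℝ) (hβ : -1 < β) (hβ0 : β ≤ 0) (x : ℝ) (hx : 0 < x) :
    ‖∫ η in Ioi (0:ℝ), gC β x η‖ ≤ (π / x) ^ (β + 1) / (β + 1) := by
  set h := π / x with hdef
  have hh : 0 < h := by positivity
  have hxh : x * h = π := by rw [hdef]; field_simp
  refine le_trans ?_ (fR_Ioc β hβ h hh)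
  have fi := fR_int β hβ
  have gi := gC_int β x hβ
  have fs := split_int _ h hh fi
  have gs := split_int _ h hh gi
  have fsi := shift_integrable _ h (fi.mono_set (Ioi_subset_Ioi hh.le))
  have e : ∫ η in Ioi (0:ℝ), ((fR β η - fR β (η + h) : ℝ) : ℂ) *
      Complex.exp ((x * η : ℝ) * Complex.I) =
      (∫ η in Ioi (0:ℝ), gC β x η) + ∫ η in Ioi h, gC β x η := by
    rw [← shift_int (gC β x) h, ← integral_add gi
      (shift_integrable _ h (gi.mono_set (Ioi_subset_Ioi hh.le)))]
    congr 1; ext η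
    unfold gC
    have : Complex.exp ((x * (η + h) : ℝ) * Complex.I) = - Complex.exp ((x * η : ℝ) * Complex.I) := by
      rw [mul_add, hxh]; push_cast
      rw [add_mul, Complex.exp_add, Complex.exp_pi_mul_I]; ring
    rw [this]; push_cast; ring
  have b1 : ‖∫ η in Ioi (0:ℝ), ((fR β η - fR β (η + h) : ℝ) : ℂ) *
      Complex.exp ((x * η : ℝ) * Complex.I)‖ ≤ ∫ η in Ioc 0 h, fR β η := by
    have : ∫ η in Ioc 0 h, fR β η = ∫ η in Ioi (0:ℝ), (fR β η - fR β (η + h)) := by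
      rw [integral_sub fi fsi, shift_int (fR β) h, fs]; ring
    rw [this]
    refine (norm_integral_le_integral_norm _).trans_eq ?_
    refine setIntegral_congr_fun measurableSet_Ioi fun η hη => ?_
    have hη' : 0 < η := hη
    have := fR_anti β hβ0 η (η + h) hη (by linarith)
    rw [norm_mul, Complex.norm_exp_ofReal_mul_I, mul_one, Complex.norm_real,
      Real.norm_of_nonneg (by linarith)]
  have b2 : ‖∫ η in Ioc 0 h, gC β x η‖ ≤ ∫ η in Ioc 0 h, fR β η := by
    refine (norm_integral_le_integral_norm _).trans_eq ?_
    exact setIntegral_congr_fun measurableSet_Ioc fun η hη => gC_norm β x η hη.1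
  rw [e] at b1
  have : (2:ℂ) * ∫ η in Ioi (0:ℝ), gC β x η = ((∫ η in Ioi (0:ℝ), gC β x η) + ∫ η in Ioi h, gC β x η)
      + ∫ η in Ioc 0 h, gC β x η := by
    rw [gs]; ring
  have h2 := norm_add_le ((∫ η in Ioi (0:ℝ), gC β x η) + ∫ η in Ioi h, gC β x η)
    (∫ η in Ioc 0 h, gC β x η)
  rw [← this, norm_mul, Complex.norm_ofNat] at h2
  linarith

lemma fR_tendsto (β : ℝ) : Filter.Tendsto (fR β) Filter.atTop (nhds 0) := by
  have h := (rpow_mul_exp_neg_mul_sq_isLittleO_exp_neg (b := 1) one_pos β)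
  have h2 : Filter.Tendsto (fun x : ℝ => Real.exp (-(1/2) * x)) Filter.atTop (nhds 0) := by
    apply Real.tendsto_exp_atBot.comp
    exact Filter.tendsto_id.const_mul_atTop_of_neg (by norm_num)
  refine (h.trans_tendsto h2).congr fun η => ?_
  simp [fR, mul_comm]

lemma ibp (β : ℝ) (hβ : 0 < β) (x : ℝ) :
    x * ‖∫ η in Ioi (0:ℝ), gC β x η‖ ≤ β * ‖∫ η in Ioi (0:ℝ), gC (β - 1) x η‖
      + 2 * ‖∫ η in Ioi (0:ℝ), gC (β + 1) x η‖ := by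
  have i0 := gC_int β x (by linarith)
  have i1 := gC_int (β - 1) x (by linarith)
  have i2 := gC_int (β + 1) x (by linarith)
  have key := integral_Ioi_of_hasDerivAt_of_tendsto (a := 0) (f := gC β x) (m := 0)
    (f' := fun η => (β : ℂ) * gC (β - 1) x η - 2 * gC (β + 1) x η + (x * Complex.I) * gC β x η)
    ?_ ?_ ?_ ?_
  · have z : gC β x 0 = 0 := by simp [gC, fR, Real.zero_rpow hβ.ne']
    have i12 : IntegrableOn (fun η => (β : ℂ) * gC (β - 1) x η - 2 * gC (β + 1) x η) (Ioi 0) :=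
      (i1.const_mul _).sub (i2.const_mul _)
    rw [integral_add i12 (i0.const_mul _),
      integral_sub (i1.const_mul _) (i2.const_mul _), integral_const_mul, integral_const_mul,
      integral_const_mul, z, sub_zero] at key
    have k2 : (x * Complex.I) * ∫ η in Ioi (0:ℝ), gC β x η =
      2 * (∫ η in Ioi (0:ℝ), gC (β + 1) x η) - (β : ℂ) * ∫ η in Ioi (0:ℝ), gC (β - 1) x η := by
      linear_combination key
    have k3 := norm_sub_le (2 * (∫ η in Ioi (0:ℝ), gC (β + 1) x η))
      ((β : ℂ) * ∫ η in Ioi (0:ℝ), gC (β - 1) x η)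
    rw [← k2] at k3
    simp only [norm_mul, Complex.norm_I, Complex.norm_real, Complex.norm_ofNat, mul_one,
      Real.norm_eq_abs, abs_of_pos hβ] at k3
    have := mul_le_mul_of_nonneg_right (le_abs_self x) (norm_nonneg (∫ η in Ioi (0:ℝ), gC β x η))
    linarith
  · apply Continuous.continuousWithinAt
    unfold gC fR
    have : Continuous fun η : ℝ => η ^ β := Real.continuous_rpow_const hβ.le
    fun_prop
  · intro η hη
    have hη : 0 < η := hη
    have d1 : HasDerivAt (fR β) (β * fR (β - 1) η - 2 * fR (β + 1) η) η := by
      have := (((hasDerivAt_pow 2 η).neg).exp).mul (Real.hasDerivAt_rpow_const (p := β) (Or.inl hη.ne'))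
      refine this.congr_deriv ?_
      simp only [fR, Pi.neg_apply]
      rw [Real.rpow_add_one hη.ne']
      push_cast
      ring
    have d2 : HasDerivAt (fun η : ℝ => Complex.exp ((x * η : ℝ) * Complex.I))
        (Complex.exp ((x * η : ℝ) * Complex.I) * ((x * 1 : ℝ) * Complex.I)) η :=
      ((((hasDerivAt_id η).const_mul x).ofReal_comp).mul_const Complex.I).cexp
    refine (d1.ofReal_comp.mul d2).congr_deriv ?_
    simp only [gC]
    push_cast
    ring
  · exact ((i1.const_mul _).sub (i2.const_mul _)).add (i0.const_mul _)
  · rw [tendsto_zero_iff_norm_tendsto_zero]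
    refine (fR_tendsto β).congr' ?_
    filter_upwards [Filter.eventually_gt_atTop 0] with η hη
    exact (gC_norm β x η hη).symm

lemma main_ind (k : ℕ) : ∀ β : ℝ, -1 < β → ∃ C : ℝ, 0 < C ∧ ∀ x : ℝ, 1 ≤ x →
    ‖∫ η in Ioi (0:ℝ), gC β x η‖ ≤ C * x ^ (-(min (k:ℝ) (β + 1))) := by
  induction k with
  | zero =>
    intro β hβ
    refine ⟨(∫ η in Ioi (0:ℝ), fR β η) + 1, ?_, fun x hx => ?_⟩
    · have := setIntegral_nonneg (μ := volume) (measurableSet_Ioi (a := (0:ℝ))) (fun η hη => fR_nonneg β η hη)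
      linarith
    · rw [min_eq_left (by push_cast; linarith)]
      simp only [Nat.cast_zero, neg_zero, Real.rpow_zero, mul_one]
      linarith [gC_bdd β x]
  | succ k ih =>
    intro β hβ
    rcases le_or_gt β 0 with h0 | h0
    · have p : 0 < β + 1 := by linarith
      refine ⟨π ^ (β + 1) / (β + 1), by positivity, fun x hx => ?_⟩
      rw [min_eq_right (by push_cast; linarith [(Nat.cast_nonneg k : (0:ℝ) ≤ k)])]
      refine (base β hβ h0 x (by linarith)).trans_eq ?_
      rw [Real.div_rpow pi_pos.le (by linarith), Real.rpow_neg (by linarith)]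
      ring
    · obtain ⟨C1, c1, h1⟩ := ih (β - 1) (by linarith)
      obtain ⟨C2, c2, h2⟩ := ih (β + 1) (by linarith)
      refine ⟨β * C1 + 2 * C2, by positivity, fun x hx => ?_⟩
      have hx0 : 0 < x := by linarith
      have a1 := h1 x hx
      have a2 := h2 x hx
      have a3 := ibp β h0 x
      rw [sub_add_cancel] at a1
      have a4 : x ^ (-(min (k:ℝ) (β + 1 + 1))) ≤ x ^ (-(min (k:ℝ) β)) := by
        apply Real.rpow_le_rpow_of_exponent_le hx
        exact neg_le_neg (min_le_min_left _ (by linarith))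
      have a5 : x * x ^ (-(min ((k + 1 : ℕ):ℝ) (β + 1))) = x ^ (-(min (k:ℝ) β)) := by
        push_cast
        rw [min_add_add_right, neg_add, Real.rpow_add hx0, Real.rpow_neg_one]
        field_simp
      have a6 := mul_le_mul_of_nonneg_left a1 h0.le
      have a7 := mul_le_mul_of_nonneg_left a4 c2.le
      refine le_of_mul_le_mul_left ?_ hx0
      calc _ ≤ _ := a3
        _ ≤ (β * C1 + 2 * C2) * x ^ (-(min (k:ℝ) β)) := by linarith
        _ = _ := by rw [← a5]; ring

/-- For `β > -1` and `J(x) = ∫_0^∞ e^{-η²} η^β cos(xη) dη`, there is a constant `C = C_β`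
with `|J(x)| ≤ C · min(1, |x|^{-(β+1)})`; here `min(1,|x|^{-(β+1)}) = (max 1 |x|)^{-(β+1)}`. -/
theorem stmt1 (β : ℝ) (hβ : -1 < β) :
    ∃ C : ℝ, 0 < C ∧ ∀ x : ℝ,
      |∫ η in Set.Ioi (0 : ℝ), Real.exp (-η ^ 2) * η ^ β * Real.cos (x * η)|
        ≤ C * (max 1 |x|) ^ (-(β + 1)) := by
  obtain ⟨k, hk⟩ := exists_nat_ge (β + 1)
  obtain ⟨C1, c1, h1⟩ := main_ind k β hβ
  obtain ⟨C0, c0, h0⟩ := main_ind 0 β hβ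
  have nn := setIntegral_nonneg (μ := volume) (measurableSet_Ioi (a := (0:ℝ))) (fun η hη => fR_nonneg β η hη)
  refine ⟨C1 + ∫ η in Ioi (0:ℝ), fR β η, by linarith, fun x => ?_⟩
  have e : ∫ η in Set.Ioi (0 : ℝ), Real.exp (-η ^ 2) * η ^ β * Real.cos (x * η)
      = (∫ η in Ioi (0:ℝ), gC β |x| η).re := by
    have := integral_re (gC_int β |x| hβ)
    simp only [RCLike.re_to_complex] at this
    rw [← this]
    refine setIntegral_congr_fun measurableSet_Ioi fun η hη => ?_
    have hη : 0 < η := hη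
    simp only [gC, Complex.re_ofReal_mul, Complex.exp_ofReal_mul_I_re, fR]
    rw [← Real.cos_abs (x * η), abs_mul, abs_of_pos hη]
  rw [e]
  refine (Complex.abs_re_le_norm _).trans ?_
  rcases le_total 1 |x| with hx | hx
  · rw [max_eq_right hx]
    have := h1 _ hx
    rw [min_eq_right hk] at this
    have p : 0 ≤ |x| ^ (-(β + 1)) := by positivity
    nlinarith [mul_nonneg nn p]
  · rw [max_eq_left hx, Real.one_rpow]
    linarith [gC_bdd β |x|]
end

section
/- Let □_t(x,y,h) = G_t(x+y+h) - G_t(x+y) - G_t(x+h) + G_t(x), and α, β ∈ (0,1). Then ∫_ℝ ∫_ℝ ∫_ℝ |□_t(x,y,h)|^2 |h|^{-1-2α} |y|^{-1-2β} dy dh dx = C_{α,β} t^{-(1/2+α+β)} for some finite constant C_{α,β}, for every t > 0. -/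
open MeasureTheory Real Set

/-- The one-dimensional heat kernel. -/
noncomputable def heatKernel (t x : ℝ) : ℝ :=
  (Real.sqrt (4 * Real.pi * t))⁻¹ * Real.exp (-x ^ 2 / (4 * t))

lemma aux_scale (a : ℝ) (ha : 0 < a) (f : ℝ → ENNReal) :
    ∫⁻ x : ℝ, f x = ENNReal.ofReal a * ∫⁻ x : ℝ, f (a * x) := by
  conv_lhs => rw [← Real.smul_map_volume_mul_left ha.ne']
  rw [lintegral_smul_measure, abs_of_pos ha, smul_eq_mul]
  congr 1
  exact lintegral_map_equiv f (Homeomorph.mulLeft₀ a ha.ne').toMeasurableEquiv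

lemma aux_jensen (f : ℝ → ℝ) (hf : Continuous f) :
    (∫ s in (0:ℝ)..1, f s) ^ 2 ≤ ∫ s in (0:ℝ)..1, (f s) ^ 2 := by
  set c := ∫ s in (0:ℝ)..1, f s with hc
  have h0 : 0 ≤ ∫ s in (0:ℝ)..1, (f s - c) ^ 2 :=
    intervalIntegral.integral_nonneg (by norm_num) (fun s _ => sq_nonneg _)
  have h1 : ∫ s in (0:ℝ)..1, (f s - c) ^ 2
      = (∫ s in (0:ℝ)..1, (f s) ^ 2) - c ^ 2 := by
    have e : ∀ s, (f s - c) ^ 2 = (f s ^ 2 - (2 * c) * f s) + c ^ 2 := fun s => by ring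
    simp_rw [e]
    have i1 : IntervalIntegrable (fun s => f s ^ 2) volume 0 1 :=
      (by fun_prop : Continuous fun s => f s ^ 2).intervalIntegrable _ _
    have i2 : IntervalIntegrable (fun s => (2 * c) * f s) volume 0 1 :=
      (by fun_prop : Continuous fun s => (2 * c) * f s).intervalIntegrable _ _
    rw [intervalIntegral.integral_add (i1.sub i2) (by simp),
      intervalIntegral.integral_sub i1 i2, intervalIntegral.integral_const_mul, ← hc]
    simp; ring
  linarith

lemma aux_diff1 (f f' : ℝ → ℝ) (hf : ∀ x, HasDerivAt f (f' x) x) (hc : Continuous f') (h : ℝ) :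
    ∫⁻ x : ℝ, ENNReal.ofReal ((f (x + h) - f x) ^ 2)
      ≤ ENNReal.ofReal (h ^ 2) * ∫⁻ x : ℝ, ENNReal.ofReal ((f' x) ^ 2) := by
  have key : ∀ x : ℝ, ENNReal.ofReal ((f (x + h) - f x) ^ 2)
      ≤ ENNReal.ofReal (h ^ 2) * ∫⁻ s in Ioc (0:ℝ) 1, ENNReal.ofReal ((f' (x + s * h)) ^ 2) := by
    intro x
    have h1 : f (x + h) - f x = h * ∫ s in (0:ℝ)..1, f' (x + s * h) := by
      have hd : ∀ s ∈ uIcc (0:ℝ) 1,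
          HasDerivAt (fun s => f (x + s * h)) (f' (x + s * h) * h) s := by
        intro s _
        have : HasDerivAt (fun s : ℝ => x + s * h) h s := by
          simpa using ((hasDerivAt_id s).mul_const h).const_add x
        exact (hf (x + s * h)).comp s this
      have := intervalIntegral.integral_eq_sub_of_hasDerivAt hd
        ((by fun_prop : Continuous fun s => f' (x + s * h) * h).intervalIntegrable _ _)
      rw [intervalIntegral.integral_mul_const] at this
      simp at this
      linarith
    have hcc : Continuous fun s => f' (x + s * h) := by fun_prop
    have h2 := aux_jensen _ hcc
    have h3 : ENNReal.ofReal (∫ s in (0:ℝ)..1, (f' (x + s * h)) ^ 2)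
        = ∫⁻ s in Ioc (0:ℝ) 1, ENNReal.ofReal ((f' (x + s * h)) ^ 2) := by
      rw [intervalIntegral.integral_of_le (by norm_num)]
      apply ofReal_integral_eq_lintegral_ofReal
      · have := (hcc.pow 2).intervalIntegrable (μ := volume) 0 1
        exact (intervalIntegrable_iff_integrableOn_Ioc_of_le (by norm_num)).1 this
      · exact Filter.Eventually.of_forall fun s => sq_nonneg _
    rw [← h3, ← ENNReal.ofReal_mul (sq_nonneg h), h1, mul_pow]
    exact ENNReal.ofReal_le_ofReal (mul_le_mul_of_nonneg_left h2 (sq_nonneg h))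
  calc _ ≤ ∫⁻ x : ℝ, ENNReal.ofReal (h ^ 2) *
        ∫⁻ s in Ioc (0:ℝ) 1, ENNReal.ofReal ((f' (x + s * h)) ^ 2) := lintegral_mono key
    _ = ENNReal.ofReal (h ^ 2) * ∫⁻ x : ℝ,
        ∫⁻ s in Ioc (0:ℝ) 1, ENNReal.ofReal ((f' (x + s * h)) ^ 2) :=
        lintegral_const_mul' _ _ ENNReal.ofReal_ne_top
    _ = ENNReal.ofReal (h ^ 2) * ∫⁻ s in Ioc (0:ℝ) 1,
        ∫⁻ x : ℝ, ENNReal.ofReal ((f' (x + s * h)) ^ 2) := by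
        rw [lintegral_lintegral_swap]
        have : Continuous (Function.uncurry fun x s : ℝ => ENNReal.ofReal ((f' (x + s * h)) ^ 2)) := by
          unfold Function.uncurry
          exact ENNReal.continuous_ofReal.comp (by fun_prop)
        exact this.measurable.aemeasurable
    _ = _ := by
        congr 1
        have : ∀ s : ℝ, ∫⁻ x : ℝ, ENNReal.ofReal ((f' (x + s * h)) ^ 2)
          = ∫⁻ x : ℝ, ENNReal.ofReal ((f' x) ^ 2) := fun s =>
          lintegral_add_right_eq_self (fun x => ENNReal.ofReal ((f' x) ^ 2)) (s * h)
        simp [this]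

lemma aux_diff2 (f : ℝ → ℝ) (hc : Continuous f) (h : ℝ) :
    ∫⁻ x : ℝ, ENNReal.ofReal ((f (x + h) - f x) ^ 2)
      ≤ ENNReal.ofReal 4 * ∫⁻ x : ℝ, ENNReal.ofReal ((f x) ^ 2) := by
  have m : Measurable fun x => ENNReal.ofReal ((f x) ^ 2) :=
    (ENNReal.continuous_ofReal.comp (by fun_prop)).measurable
  have m' : Measurable fun x => ENNReal.ofReal ((f (x + h)) ^ 2) :=
    (ENNReal.continuous_ofReal.comp (by fun_prop)).measurable
  calc _ ≤ ∫⁻ x : ℝ, ENNReal.ofReal 2 *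
        (ENNReal.ofReal ((f (x + h)) ^ 2) + ENNReal.ofReal ((f x) ^ 2)) := by
        apply lintegral_mono
        intro x
        dsimp only
        rw [← ENNReal.ofReal_add (sq_nonneg _) (sq_nonneg _), ← ENNReal.ofReal_mul (by norm_num)]
        apply ENNReal.ofReal_le_ofReal
        nlinarith [sq_nonneg (f (x + h) + f x)]
    _ = ENNReal.ofReal 2 * ((∫⁻ x : ℝ, ENNReal.ofReal ((f x) ^ 2))
          + (∫⁻ x : ℝ, ENNReal.ofReal ((f x) ^ 2))) := by
        rw [lintegral_const_mul' _ _ ENNReal.ofReal_ne_top, lintegral_add_left m',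
          lintegral_add_right_eq_self (fun x => ENNReal.ofReal ((f x) ^ 2)) h]
    _ = _ := by
        rw [← two_mul, ← mul_assoc]
        congr 1
        norm_num

lemma aux_diff (f f' : ℝ → ℝ) (hf : ∀ x, HasDerivAt f (f' x) x) (hc : Continuous f') (h : ℝ) :
    ∫⁻ x : ℝ, ENNReal.ofReal ((f (x + h) - f x) ^ 2)
      ≤ ENNReal.ofReal (min 4 (h ^ 2)) * ((∫⁻ x : ℝ, ENNReal.ofReal ((f x) ^ 2))
        + (∫⁻ x : ℝ, ENNReal.ofReal ((f' x) ^ 2))) := by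
  have hcf : Continuous f := continuous_iff_continuousAt.2 fun x => (hf x).continuousAt
  rcases min_choice (4:ℝ) (h ^ 2) with e | e <;> rw [e]
  · exact (aux_diff2 f hcf h).trans (by gcongr; exact le_self_add)
  · exact (aux_diff1 f f' hf hc h).trans (by gcongr; exact le_add_self)

lemma aux_box (f f' f'' : ℝ → ℝ) (hf : ∀ x, HasDerivAt f (f' x) x)
    (hf' : ∀ x, HasDerivAt f' (f'' x) x) (hc : Continuous f'') (y h : ℝ) :
    ∫⁻ x : ℝ, ENNReal.ofReal (|f (x + y + h) - f (x + y) - f (x + h) + f x| ^ 2)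
      ≤ ENNReal.ofReal (min 4 (y ^ 2)) * (ENNReal.ofReal (min 4 (h ^ 2)) *
        (((∫⁻ x : ℝ, ENNReal.ofReal ((f x) ^ 2)) + (∫⁻ x : ℝ, ENNReal.ofReal ((f' x) ^ 2)))
        + ((∫⁻ x : ℝ, ENNReal.ofReal ((f' x) ^ 2)) + (∫⁻ x : ℝ, ENNReal.ofReal ((f'' x) ^ 2))))) := by
  have hcf' : Continuous f' := continuous_iff_continuousAt.2 fun x => (hf' x).continuousAt
  have e : ∀ x, |f (x + y + h) - f (x + y) - f (x + h) + f x| ^ 2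
      = ((fun x => f (x + h) - f x) (x + y) - (fun x => f (x + h) - f x) x) ^ 2 := by
    intro x; rw [sq_abs]; ring
  simp_rw [e]
  refine (aux_diff (fun x => f (x + h) - f x) (fun x => f' (x + h) - f' x)
    (fun x => ((hf (x + h)).comp_add_const x h).sub (hf x)) (by fun_prop) y).trans ?_
  rw [mul_add (ENNReal.ofReal (min 4 (h ^ 2)))]
  gcongr
  · exact aux_diff f f' hf hcf' h
  · exact aux_diff f' f'' hf' hc h

lemma aux_min (a : ℝ) (ha : a ∈ Ioo (0:ℝ) 1) :
    ∫⁻ y : ℝ, ENNReal.ofReal (min 4 (y ^ 2)) * ENNReal.ofReal (|y| ^ (-1 - 2 * a)) < ⊤ := by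
  obtain ⟨h0, h1⟩ := ha
  set F : ℝ → ℝ := fun y => min 4 (y ^ 2) * |y| ^ (-1 - 2 * a) with hF
  have hm : Measurable F := by
    rw [hF]; fun_prop
  have hn : ∀ y, 0 ≤ F y := fun y => by rw [hF]; positivity
  have i1 : IntegrableOn F (Ioc 0 1) := by
    have : IntegrableOn (fun y : ℝ => y ^ (1 - 2 * a)) (Ioc 0 1) := by
      rw [integrableOn_Ioc_iff_integrableOn_Ioo,
        intervalIntegral.integrableOn_Ioo_rpow_iff one_pos]
      linarith
    refine Integrable.mono' this hm.aestronglyMeasurable ?_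
    filter_upwards [ae_restrict_mem measurableSet_Ioc] with y hy
    rw [Real.norm_of_nonneg (hn y), hF]
    dsimp only
    rw [abs_of_pos hy.1, show (1 - 2 * a) = 2 + (-1 - 2 * a) by ring, Real.rpow_add hy.1]
    rw [Real.rpow_two]
    exact mul_le_mul_of_nonneg_right (min_le_right _ _) (Real.rpow_nonneg hy.1.le _)
  have i2 : IntegrableOn F (Ioi 1) := by
    have : IntegrableOn (fun y : ℝ => 4 * y ^ (-1 - 2 * a)) (Ioi 1) :=
      (integrableOn_Ioi_rpow_of_lt (by linarith) one_pos).const_mul 4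
    refine Integrable.mono' this hm.aestronglyMeasurable ?_
    filter_upwards [ae_restrict_mem measurableSet_Ioi] with y hy
    have hy0 : (0:ℝ) < y := lt_trans one_pos hy
    rw [Real.norm_of_nonneg (hn y), hF]
    dsimp only
    rw [abs_of_pos hy0]
    gcongr
    exact min_le_left _ _
  have i3 : IntegrableOn F (Ioi 0) := by
    rw [← Ioc_union_Ioi_eq_Ioi (zero_le_one (α := ℝ))]; exact i1.union i2
  have i4 : IntegrableOn F (Iic 0) := by
    rw [integrableOn_Iic_iff_integrableOn_Iio]
    have : IntegrableOn F (Ioi (-0)) := by simpa using i3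
    have := this.comp_neg_Iio
    simpa [hF] using this
  have i5 : Integrable F := by
    rw [← integrableOn_univ, ← Iic_union_Ioi (a := (0:ℝ))]; exact i4.union i3
  have := (hasFiniteIntegral_iff_ofReal (Filter.Eventually.of_forall hn)).1 i5.2
  convert this using 3 with y
  rw [hF, ENNReal.ofReal_mul (by positivity)]

lemma aux_gauss (c p q : ℝ) :
    ∫⁻ x : ℝ, ENNReal.ofReal ((c * (p + q * x ^ 2) * exp (-x ^ 2 / 4)) ^ 2) < ⊤ := by
  have h0 : Integrable fun x : ℝ => exp (-(1/2) * x ^ 2) :=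
    integrable_exp_neg_mul_sq (by norm_num)
  have h2 : Integrable fun x : ℝ => x ^ 2 * exp (-(1/2) * x ^ 2) := by
    have := integrable_rpow_mul_exp_neg_mul_sq (b := 1/2) (by norm_num) (s := 2) (by norm_num)
    simpa using this
  have h4 : Integrable fun x : ℝ => x ^ 4 * exp (-(1/2) * x ^ 2) := by
    have := integrable_rpow_mul_exp_neg_mul_sq (b := 1/2) (by norm_num) (s := (4:ℕ)) (by norm_num)
    simpa only [Real.rpow_natCast] using this
  have hi : Integrable fun x : ℝ => (c * (p + q * x ^ 2) * exp (-x ^ 2 / 4)) ^ 2 := by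
    have := ((h0.const_mul (c^2*p^2)).add (h2.const_mul (2*c^2*p*q))).add (h4.const_mul (c^2*q^2))
    refine this.congr (Filter.Eventually.of_forall fun x => ?_)
    have e : exp (-(1/2) * x ^ 2) = exp (-x ^ 2 / 4) ^ 2 := by
      rw [← Real.exp_nat_mul]; congr 1; push_cast; ring
    simp only [Pi.add_apply, e]; ring
  exact (hasFiniteIntegral_iff_ofReal (Filter.Eventually.of_forall fun x => sq_nonneg _)).1 hi.2

lemma aux_gauss1 (c : ℝ) :
    ∫⁻ x : ℝ, ENNReal.ofReal ((c * (-x / 2) * exp (-x ^ 2 / 4)) ^ 2) < ⊤ := by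
  refine lt_of_le_of_lt (lintegral_mono fun x => ?_) (aux_gauss c 1 1)
  apply ENNReal.ofReal_le_ofReal
  rw [mul_pow, mul_pow, mul_pow _ (exp _), mul_pow c]
  gcongr ?_ * ?_ * ?_
  nlinarith [sq_nonneg x, sq_nonneg (x^2)]

lemma aux_hk1 : heatKernel 1 = fun x => (√(4 * π))⁻¹ * exp (-x ^ 2 / 4) := by
  funext x; simp [heatKernel]

lemma aux_cont : Continuous (heatKernel 1) := by
  rw [aux_hk1]; fun_prop

lemma aux_meas (α β : ℝ) : Measurable fun p : ℝ × ℝ × ℝ => ENNReal.ofReal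
          (|heatKernel 1 (p.1 + p.2.2 + p.2.1) - heatKernel 1 (p.1 + p.2.2)
              - heatKernel 1 (p.1 + p.2.1) + heatKernel 1 p.1| ^ 2
            * |p.2.1| ^ (-1 - 2 * α) * |p.2.2| ^ (-1 - 2 * β)) := by
  have := aux_cont.measurable
  fun_prop

lemma aux_meas2 (α β : ℝ) : Measurable (Function.uncurry fun x h : ℝ => ∫⁻ y : ℝ, ENNReal.ofReal
          (|heatKernel 1 (x + y + h) - heatKernel 1 (x + y)
              - heatKernel 1 (x + h) + heatKernel 1 x| ^ 2
            * |h| ^ (-1 - 2 * α) * |y| ^ (-1 - 2 * β))) := by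
  have hm := aux_cont.measurable
  have : Measurable fun q : (ℝ × ℝ) × ℝ => ENNReal.ofReal
          (|heatKernel 1 (q.1.1 + q.2 + q.1.2) - heatKernel 1 (q.1.1 + q.2)
              - heatKernel 1 (q.1.1 + q.1.2) + heatKernel 1 q.1.1| ^ 2
            * |q.1.2| ^ (-1 - 2 * α) * |q.2| ^ (-1 - 2 * β)) := by fun_prop
  exact this.lintegral_prod_right' (ν := volume)

lemma aux_fin (α β : ℝ) (hα : α ∈ Set.Ioo (0 : ℝ) 1) (hβ : β ∈ Set.Ioo (0 : ℝ) 1) :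
    (∫⁻ x : ℝ, ∫⁻ h : ℝ, ∫⁻ y : ℝ, ENNReal.ofReal
          (|heatKernel 1 (x + y + h) - heatKernel 1 (x + y)
              - heatKernel 1 (x + h) + heatKernel 1 x| ^ 2
            * |h| ^ (-1 - 2 * α) * |y| ^ (-1 - 2 * β))) < ⊤ := by
  have hM := aux_meas α β
  set c := (√(4 * π))⁻¹
  set f' : ℝ → ℝ := fun x => c * (-x / 2) * exp (-x ^ 2 / 4)
  set f'' : ℝ → ℝ := fun x => c * (-1 / 2 + 1 / 4 * x ^ 2) * exp (-x ^ 2 / 4)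
  have de : ∀ x : ℝ, HasDerivAt (fun x : ℝ => exp (-x ^ 2 / 4)) (exp (-x ^ 2 / 4) * (-x / 2)) x := by
    intro x
    have : HasDerivAt (fun x : ℝ => -x ^ 2 / 4) (-x / 2) x := by
      refine HasDerivAt.congr_deriv ((hasDerivAt_pow 2 x).neg.div_const 4) ?_
      norm_num; ring
    exact this.exp
  have hf : ∀ x, HasDerivAt (heatKernel 1) (f' x) x := by
    intro x
    rw [aux_hk1]
    refine HasDerivAt.congr_deriv ((de x).const_mul c) ?_
    simp only [f']; ring
  have hf' : ∀ x, HasDerivAt f' (f'' x) x := by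
    intro x
    have : HasDerivAt (fun x : ℝ => c * (-x / 2)) (c * (-1 / 2)) x :=
      ((hasDerivAt_id x).neg.div_const 2).const_mul c
    refine HasDerivAt.congr_deriv (this.mul (de x)) ?_
    simp only [f'']; ring
  have hc : Continuous f'' := by fun_prop
  set K := (((∫⁻ x : ℝ, ENNReal.ofReal ((heatKernel 1 x) ^ 2)) + (∫⁻ x : ℝ, ENNReal.ofReal ((f' x) ^ 2)))
        + ((∫⁻ x : ℝ, ENNReal.ofReal ((f' x) ^ 2)) + (∫⁻ x : ℝ, ENNReal.ofReal ((f'' x) ^ 2)))) with hK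
  have hKt : K < ⊤ := by
    have a0 : ∫⁻ x : ℝ, ENNReal.ofReal ((heatKernel 1 x) ^ 2) < ⊤ := by
      have := aux_gauss c 1 0
      rw [aux_hk1]; simpa only [zero_mul, add_zero, mul_one] using this
    have a1 := aux_gauss1 c
    have a2 := aux_gauss c (-1/2) (1/4)
    exact ENNReal.add_lt_top.2 ⟨ENNReal.add_lt_top.2 ⟨a0, a1⟩, ENNReal.add_lt_top.2 ⟨a1, a2⟩⟩
  clear_value K
  rw [lintegral_lintegral_swap]
  swap
  · exact (aux_meas2 α β).aemeasurable
  have hb : ∀ h : ℝ, (∫⁻ x : ℝ, ∫⁻ y : ℝ, ENNReal.ofReal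
          (|heatKernel 1 (x + y + h) - heatKernel 1 (x + y)
              - heatKernel 1 (x + h) + heatKernel 1 x| ^ 2
            * |h| ^ (-1 - 2 * α) * |y| ^ (-1 - 2 * β)))
      ≤ ((∫⁻ y : ℝ, ENNReal.ofReal (min 4 (y ^ 2)) * ENNReal.ofReal (|y| ^ (-1 - 2 * β))) * K) *
        (ENNReal.ofReal (min 4 (h ^ 2)) * ENNReal.ofReal (|h| ^ (-1 - 2 * α))) := by
    intro h
    rw [lintegral_lintegral_swap]
    swap
    · exact (hM.comp (by fun_prop : Measurable fun q : ℝ × ℝ => (q.1, h, q.2))).aemeasurable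
    rw [mul_assoc, ← lintegral_mul_const' _ _ (ENNReal.mul_ne_top hKt.ne (by finiteness))]
    apply lintegral_mono
    intro y
    dsimp only
    have e : ∀ x : ℝ, ENNReal.ofReal
          (|heatKernel 1 (x + y + h) - heatKernel 1 (x + y)
              - heatKernel 1 (x + h) + heatKernel 1 x| ^ 2
            * |h| ^ (-1 - 2 * α) * |y| ^ (-1 - 2 * β))
        = ENNReal.ofReal (|heatKernel 1 (x + y + h) - heatKernel 1 (x + y)
              - heatKernel 1 (x + h) + heatKernel 1 x| ^ 2)
          * (ENNReal.ofReal (|h| ^ (-1 - 2 * α)) * ENNReal.ofReal (|y| ^ (-1 - 2 * β))) := by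
      intro x
      rw [← ENNReal.ofReal_mul (by positivity), ← ENNReal.ofReal_mul (by positivity), mul_assoc]
    simp_rw [e]
    rw [lintegral_mul_const' _ _ (by finiteness)]
    refine (mul_le_mul_left (aux_box _ f' f'' hf hf' hc y h) _).trans (le_of_eq ?_)
    rw [← hK]
    ring
  refine lt_of_le_of_lt (lintegral_mono hb) ?_
  have b1 := aux_min β hβ
  have b2 := aux_min α hα
  have b3 := ENNReal.mul_lt_top b1 hKt
  rw [lintegral_const_mul' _ _ b3.ne]
  exact ENNReal.mul_lt_top b3 b2

lemma aux_pos (α β : ℝ) :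
    0 < (∫⁻ x : ℝ, ∫⁻ h : ℝ, ∫⁻ y : ℝ, ENNReal.ofReal
          (|heatKernel 1 (x + y + h) - heatKernel 1 (x + y)
              - heatKernel 1 (x + h) + heatKernel 1 x| ^ 2
            * |h| ^ (-1 - 2 * α) * |y| ^ (-1 - 2 * β))) := by
  have hM := aux_meas α β
  have hc := aux_cont
  have e : (∫⁻ x : ℝ, ∫⁻ h : ℝ, ∫⁻ y : ℝ, ENNReal.ofReal
          (|heatKernel 1 (x + y + h) - heatKernel 1 (x + y)
              - heatKernel 1 (x + h) + heatKernel 1 x| ^ 2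
            * |h| ^ (-1 - 2 * α) * |y| ^ (-1 - 2 * β)))
      = ∫⁻ p : ℝ × ℝ × ℝ, ENNReal.ofReal
          (|heatKernel 1 (p.1 + p.2.2 + p.2.1) - heatKernel 1 (p.1 + p.2.2)
              - heatKernel 1 (p.1 + p.2.1) + heatKernel 1 p.1| ^ 2
            * |p.2.1| ^ (-1 - 2 * α) * |p.2.2| ^ (-1 - 2 * β)) := by
    rw [Measure.volume_eq_prod, lintegral_prod _ hM.aemeasurable]
    congr 1; funext x
    rw [Measure.volume_eq_prod, lintegral_prod]
    exact (hM.comp (by fun_prop : Measurable fun q : ℝ × ℝ => (x, q))).aemeasurable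
  rw [e, lintegral_pos_iff_support hM]
  let U : Set (ℝ × ℝ × ℝ) := {p | heatKernel 1 (p.1 + p.2.2 + p.2.1) - heatKernel 1 (p.1 + p.2.2)
              - heatKernel 1 (p.1 + p.2.1) + heatKernel 1 p.1 ≠ 0} ∩ ({p | p.2.1 ≠ 0} ∩ {p | p.2.2 ≠ 0})
  have hU : IsOpen U := by
    refine (isOpen_ne_fun (by fun_prop) (by fun_prop)).inter
      ((isOpen_ne_fun (by fun_prop) (by fun_prop)).inter (isOpen_ne_fun (by fun_prop) (by fun_prop)))
  have hne : U.Nonempty := by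
    refine ⟨(-1, 1, 1), ?_, by simp, by simp⟩
    have : exp (-1 / 4 : ℝ) < 1 := by rw [Real.exp_lt_one_iff]; norm_num
    have hp : 0 < (√(4 * π))⁻¹ := by positivity
    simp only [aux_hk1, mem_ofPred_eq]
    apply ne_of_lt
    have e1 : (-(-1 + 1 + 1 : ℝ) ^ 2 / 4) = -1 / 4 := by norm_num
    have e2 : (-(-1 + 1 : ℝ) ^ 2 / 4) = 0 := by norm_num
    have e3 : (-(-1 : ℝ) ^ 2 / 4) = -1 / 4 := by norm_num
    rw [e1, e2, e3, Real.exp_zero]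
    nlinarith
  refine lt_of_lt_of_le (hU.measure_pos volume hne) (measure_mono ?_)
  rintro p ⟨h1, h2, h3⟩
  simp only [mem_ofPred_eq] at h1 h2 h3
  rw [Function.mem_support, ← pos_iff_ne_zero, ENNReal.ofReal_pos]
  have := abs_pos.2 h1
  have := abs_pos.2 h2
  have := abs_pos.2 h3
  positivity

lemma aux_hk (t x : ℝ) (ht : 0 < t) : heatKernel t (√t * x) = (√t)⁻¹ * heatKernel 1 x := by
  unfold heatKernel
  rw [mul_pow, Real.sq_sqrt ht.le, Real.sqrt_mul (by positivity), mul_inv, mul_one,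
    show -(t * x ^ 2) / (4 * t) = -x ^ 2 / (4 * 1) by field_simp]
  ring


/-- For `α, β ∈ (0,1)` and `□_t(x,y,h) = G_t(x+y+h) - G_t(x+y) - G_t(x+h) + G_t(x)`,
there is a finite constant `C_{α,β}` with
`∫∫∫ |□_t(x,y,h)|² |h|^{-1-2α} |y|^{-1-2β} dy dh dx = C_{α,β} t^{-(1/2+α+β)}` for all `t > 0`. -/
theorem stmt5 (α β : ℝ) (hα : α ∈ Set.Ioo (0 : ℝ) 1) (hβ : β ∈ Set.Ioo (0 : ℝ) 1) :
    ∃ C : ℝ, 0 < C ∧ ∀ t : ℝ, 0 < t →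
      (∫⁻ x : ℝ, ∫⁻ h : ℝ, ∫⁻ y : ℝ, ENNReal.ofReal
          (|heatKernel t (x + y + h) - heatKernel t (x + y)
              - heatKernel t (x + h) + heatKernel t x| ^ 2
            * |h| ^ (-1 - 2 * α) * |y| ^ (-1 - 2 * β)))
        = ENNReal.ofReal (C * t ^ (-(1 / 2 + α + β))) := by
  set I := (∫⁻ x : ℝ, ∫⁻ h : ℝ, ∫⁻ y : ℝ, ENNReal.ofReal
          (|heatKernel 1 (x + y + h) - heatKernel 1 (x + y)
              - heatKernel 1 (x + h) + heatKernel 1 x| ^ 2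
            * |h| ^ (-1 - 2 * α) * |y| ^ (-1 - 2 * β))) with hI
  have hfin : I < ⊤ := aux_fin α β hα hβ
  have hpos : 0 < I := aux_pos α β
  refine ⟨I.toReal, ENNReal.toReal_pos hpos.ne' hfin.ne, fun t ht => ?_⟩
  have hs : 0 < √t := Real.sqrt_pos.2 ht
  rw [ENNReal.ofReal_mul ENNReal.toReal_nonneg, ENNReal.ofReal_toReal hfin.ne]
  rw [aux_scale _ hs]
  have e2 : ∀ x : ℝ, ∀ F : ℝ → ℝ → ℝ → ENNReal, ∫⁻ h : ℝ, ∫⁻ y : ℝ, F x h y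
      = ENNReal.ofReal (√t) * (ENNReal.ofReal (√t) *
        ∫⁻ h : ℝ, ∫⁻ y : ℝ, F x (√t * h) (√t * y)) := by
    intro x F
    rw [aux_scale _ hs]
    congr 1
    rw [← lintegral_const_mul' _ _ ENNReal.ofReal_ne_top]
    congr 1; funext h
    rw [aux_scale _ hs]
  have e3 : ∀ x h y : ℝ, ENNReal.ofReal
          (|heatKernel t (√t * x + √t * y + √t * h) - heatKernel t (√t * x + √t * y)
              - heatKernel t (√t * x + √t * h) + heatKernel t (√t * x)| ^ 2
            * |√t * h| ^ (-1 - 2 * α) * |√t * y| ^ (-1 - 2 * β))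
      = ENNReal.ofReal (t⁻¹ * √t ^ (-1 - 2 * α) * √t ^ (-1 - 2 * β)) * ENNReal.ofReal
          (|heatKernel 1 (x + y + h) - heatKernel 1 (x + y)
              - heatKernel 1 (x + h) + heatKernel 1 x| ^ 2
            * |h| ^ (-1 - 2 * α) * |y| ^ (-1 - 2 * β)) := by
    intro x h y
    rw [← ENNReal.ofReal_mul (by positivity), ← mul_add, ← mul_add, ← mul_add,
      aux_hk _ _ ht, aux_hk _ _ ht, aux_hk _ _ ht, aux_hk _ _ ht, ← mul_sub, ← mul_sub, ← mul_add,
      abs_mul, abs_mul, abs_mul, abs_of_pos hs, abs_of_pos (inv_pos.2 hs),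
      Real.mul_rpow hs.le (abs_nonneg _), Real.mul_rpow hs.le (abs_nonneg _), mul_pow, inv_pow,
      Real.sq_sqrt ht.le]
    congr 1; ring
  have e4 : ∀ x : ℝ, (∫⁻ h : ℝ, ∫⁻ y : ℝ, ENNReal.ofReal
          (|heatKernel t (√t * x + y + h) - heatKernel t (√t * x + y)
              - heatKernel t (√t * x + h) + heatKernel t (√t * x)| ^ 2
            * |h| ^ (-1 - 2 * α) * |y| ^ (-1 - 2 * β)))
      = (ENNReal.ofReal (√t) * (ENNReal.ofReal (√t) *
        ENNReal.ofReal (t⁻¹ * √t ^ (-1 - 2 * α) * √t ^ (-1 - 2 * β)))) *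
        ∫⁻ h : ℝ, ∫⁻ y : ℝ, ENNReal.ofReal
          (|heatKernel 1 (x + y + h) - heatKernel 1 (x + y)
              - heatKernel 1 (x + h) + heatKernel 1 x| ^ 2
            * |h| ^ (-1 - 2 * α) * |y| ^ (-1 - 2 * β)) := by
    intro x
    rw [e2 x (fun x h y => ENNReal.ofReal
          (|heatKernel t (√t * x + y + h) - heatKernel t (√t * x + y)
              - heatKernel t (√t * x + h) + heatKernel t (√t * x)| ^ 2
            * |h| ^ (-1 - 2 * α) * |y| ^ (-1 - 2 * β)))]
    simp_rw [e3]
    rw [mul_assoc (ENNReal.ofReal (√t)), mul_assoc (ENNReal.ofReal (√t))]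
    congr 2
    rw [← lintegral_const_mul' _ _ ENNReal.ofReal_ne_top]
    congr 1; funext h
    rw [lintegral_const_mul' _ _ ENNReal.ofReal_ne_top]
  simp_rw [e4]
  rw [lintegral_const_mul' _ _ (by finiteness), ← hI, ← mul_assoc, mul_comm I]
  congr 1
  rw [← ENNReal.ofReal_mul hs.le, ← ENNReal.ofReal_mul hs.le, ← ENNReal.ofReal_mul hs.le]
  congr 1
  rw [Real.sqrt_eq_rpow, ← Real.rpow_mul ht.le, ← Real.rpow_mul ht.le, ← Real.rpow_neg_one t,
    ← Real.rpow_add ht, ← Real.rpow_add ht, ← Real.rpow_add ht, ← Real.rpow_add ht,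
    ← Real.rpow_add ht]
  congr 1; ring
end

section
/- Fix 1/4 < H < 1/2 and define □(x,y,h) = e^{-(x+y+h)^2} - e^{-(x+h)^2} - e^{-(x+y)^2} + e^{-x^2} and F(x) = ∫_ℝ ∫_ℝ |□(x,y,h)|^2 |h|^{2H-2} |y|^{2H-2} dy dh. Then there exists a constant C depending only on H such that F(x) ≤ C · min(1, |x|^{2H-2}) for all x ∈ ℝ. -/
open MeasureTheory Real Set

namespace Stmt8Aux

noncomputable def N (x : ℝ) : ℝ := max 1 |x|

lemma N_one (x : ℝ) : 1 ≤ N x := le_max_left _ _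
lemma N_pos (x : ℝ) : 0 < N x := lt_of_lt_of_le one_pos (N_one x)
lemma N_abs (x : ℝ) : |x| ≤ N x := le_max_right _ _
lemma N_le_sq (x : ℝ) : N x ≤ 1 + x ^ 2 := by
  unfold N
  apply max_le
  · nlinarith [sq_nonneg x]
  · nlinarith [sq_nonneg (|x| - 1), sq_abs x, sq_nonneg x]

lemma N_near (x u : ℝ) (h : |u - x| ≤ 1) : N x ≤ 2 * N u := by
  have h1 := N_one u
  have h2 := N_abs u
  apply max_le
  · linarith
  · have : |x| ≤ |u| + |u - x| := by
      have := abs_sub_abs_le_abs_sub x u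
      rw [abs_sub_comm] at this
      linarith
    linarith

noncomputable def g (x : ℝ) : ℝ := Real.exp (-x ^ 2)
noncomputable def g' (x : ℝ) : ℝ := -2 * x * Real.exp (-x ^ 2)
noncomputable def g'' (x : ℝ) : ℝ := (4 * x ^ 2 - 2) * Real.exp (-x ^ 2)

lemma g_deriv (x : ℝ) : HasDerivAt g (g' x) x := by
  have h : HasDerivAt (fun x : ℝ => -x ^ 2) (-(2 * x)) x := by
    have := (hasDerivAt_pow 2 x).fun_neg
    norm_num at this
    exact this
  have := h.exp
  unfold g g'
  convert this using 1
  ring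

lemma g'_deriv (x : ℝ) : HasDerivAt g' (g'' x) x := by
  have h : HasDerivAt (fun x : ℝ => -2 * x) (-2) x := by
    simpa using (hasDerivAt_id x).const_mul (-2 : ℝ)
  have := h.fun_mul (g_deriv x)
  have e : g'' x = -2 * g x + -2 * x * g' x := by
    unfold g g' g''
    ring
  rw [e]
  exact this

lemma exp_bd (u p : ℝ) (hp : p * N u ≤ 8 * (1 + u ^ 2 + (u ^ 2) ^ 2 / 2)) :
    p * Real.exp (-u ^ 2) ≤ 8 / N u := by
  have h1 := Real.quadratic_le_exp_of_nonneg (sq_nonneg u)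
  rw [le_div_iff₀ (N_pos u), Real.exp_neg]
  have h2 := Real.exp_pos (u ^ 2)
  have h3 : p * N u ≤ 8 * Real.exp (u ^ 2) := by linarith
  calc p * (Real.exp (u ^ 2))⁻¹ * N u = (p * N u) / Real.exp (u ^ 2) := by
        rw [div_eq_mul_inv]; ring
    _ ≤ 8 := by rw [div_le_iff₀ h2]; exact h3

lemma g_bd (u : ℝ) : |g u| ≤ 8 / N u := by
  unfold g
  rw [abs_of_pos (Real.exp_pos _)]
  have := exp_bd u 1 (by nlinarith [N_le_sq u, sq_nonneg u, sq_nonneg (u ^ 2)])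
  linarith

lemma g'_bd (u : ℝ) : |g' u| ≤ 8 / N u := by
  unfold g'
  rw [abs_mul, abs_of_pos (Real.exp_pos _)]
  apply exp_bd
  rw [abs_mul]
  have h1 := N_le_sq u
  have h2 : |(-2 : ℝ)| * |u| ≤ 1 + u ^ 2 := by
    norm_num
    nlinarith [sq_nonneg (|u| - 1), sq_abs u]
  calc |(-2 : ℝ)| * |u| * N u ≤ (1 + u ^ 2) * (1 + u ^ 2) :=
        mul_le_mul h2 h1 (N_pos u).le (by positivity)
    _ ≤ _ := by nlinarith [sq_nonneg u, sq_nonneg (u ^ 2)]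

lemma g''_bd (u : ℝ) : |g'' u| ≤ 8 / N u := by
  unfold g''
  rw [abs_mul, abs_of_pos (Real.exp_pos _)]
  apply exp_bd
  have h1 := N_le_sq u
  have h2 : |4 * u ^ 2 - 2| ≤ 4 * u ^ 2 + 2 := by
    rw [abs_le]; constructor <;> nlinarith [sq_nonneg u]
  calc |4 * u ^ 2 - 2| * N u ≤ (4 * u ^ 2 + 2) * (1 + u ^ 2) :=
        mul_le_mul h2 h1 (N_pos u).le (by positivity)
    _ ≤ _ := by nlinarith [sq_nonneg u, sq_nonneg (u ^ 2)]

lemma mvt (f f' : ℝ → ℝ) (hf : ∀ u, HasDerivAt f (f' u) u) (K : ℝ) (hK : 0 ≤ K)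
    (hb : ∀ u, |f' u| ≤ K / N u) (x h : ℝ) (hh : |h| ≤ 1) :
    |f (x + h) - f x| ≤ 2 * K * |h| / N x := by
  have := Convex.norm_image_sub_le_of_norm_hasDerivWithin_le (f := f) (f' := f')
    (s := Metric.closedBall x 1) (C := 2 * K / N x) (x := x) (y := x + h)
    (fun u _ => (hf u).hasDerivWithinAt) ?_ (convex_closedBall x 1)
    (by simp) (by simpa [Real.dist_eq] using hh)
  · simp only [Real.norm_eq_abs, add_sub_cancel_left] at this
    calc _ ≤ _ := this
      _ = _ := by ring
  · intro u hu
    rw [Metric.mem_closedBall, Real.dist_eq] at hu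
    rw [Real.norm_eq_abs]
    refine (hb u).trans ?_
    rw [div_le_div_iff₀ (N_pos u) (N_pos x)]
    nlinarith [N_near x u hu]

noncomputable def box (x y h : ℝ) : ℝ := g (x + y + h) - g (x + h) - g (x + y) + g x

lemma box_symm (x y h : ℝ) : box x y h = box x h y := by
  unfold box; rw [add_right_comm x y h]; ring

lemma box_ss (x y h : ℝ) (hy : |y| ≤ 1) (hh : |h| ≤ 1) :
    |box x y h| ≤ 32 * |y| * |h| / N x := by
  have := mvt (fun u => g (u + y) - g u) (fun u => g' (u + y) - g' u)
    (fun u => ((g_deriv (u + y)).comp_add_const u y).sub (g_deriv u)) (16 * |y|) (by positivity)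
    (fun u => by
      have := mvt g' g'' g'_deriv 8 (by norm_num) g''_bd u y hy
      norm_num at this
      exact this) x h hh
  unfold box
  calc _ = |g (x + h + y) - g (x + h) - (g (x + y) - g x)| := by
        rw [add_right_comm x y h]; congr 1; ring
    _ ≤ _ := this
    _ = _ := by ring

noncomputable def q (x : ℝ) : ℝ := (1 / N x) ^ 2

lemma q_nonneg (x : ℝ) : 0 ≤ q x := sq_nonneg _

lemma box_sl (x y h : ℝ) (hy : |y| ≤ 1) :
    (box x y h) ^ 2 ≤ 1024 * y ^ 2 * (q x + q (x + h)) := by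
  have h1 := mvt g g' g_deriv 8 (by norm_num) g'_bd x y hy
  have h2 := mvt g g' g_deriv 8 (by norm_num) g'_bd (x + h) y hy
  have e1 : (g (x + y) - g x) ^ 2 ≤ 256 * y ^ 2 * q x := by
    calc _ = |g (x + y) - g x| ^ 2 := (sq_abs _).symm
      _ ≤ (2 * 8 * |y| / N x) ^ 2 := by gcongr
      _ = 256 * |y| ^ 2 * q x := by unfold q; ring
      _ = _ := by rw [sq_abs]
  have e2 : (g (x + h + y) - g (x + h)) ^ 2 ≤ 256 * y ^ 2 * q (x + h) := by
    calc _ = |g (x + h + y) - g (x + h)| ^ 2 := (sq_abs _).symm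
      _ ≤ (2 * 8 * |y| / N (x + h)) ^ 2 := by gcongr
      _ = 256 * |y| ^ 2 * q (x + h) := by unfold q; ring
      _ = _ := by rw [sq_abs]
  have p1 : 0 ≤ y ^ 2 * q x := mul_nonneg (sq_nonneg _) (q_nonneg _)
  have p2 : 0 ≤ y ^ 2 * q (x + h) := mul_nonneg (sq_nonneg _) (q_nonneg _)
  have e : box x y h = (g (x + h + y) - g (x + h)) - (g (x + y) - g x) := by
    unfold box; rw [add_right_comm x y h]; ring
  rw [e]
  nlinarith [sq_nonneg ((g (x + h + y) - g (x + h)) + (g (x + y) - g x))]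

lemma g_sq (x : ℝ) : (g x) ^ 2 ≤ 64 * q x := by
  calc _ = |g x| ^ 2 := (sq_abs _).symm
      _ ≤ (8 / N x) ^ 2 := by have := g_bd x; gcongr
      _ = _ := by unfold q; ring

lemma box_ll (x y h : ℝ) :
    (box x y h) ^ 2 ≤ 1024 * (q x + q (x + h) + q (x + y) + q (x + y + h)) := by
  have h1 := g_sq x
  have h2 := g_sq (x + h)
  have h3 := g_sq (x + y)
  have h4 := g_sq (x + y + h)
  have := q_nonneg x
  have := q_nonneg (x + h)
  have := q_nonneg (x + y)
  have := q_nonneg (x + y + h)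
  unfold box
  generalize g x = a at *
  generalize g (x + h) = b at *
  generalize g (x + y) = c at *
  generalize g (x + y + h) = d at *
  nlinarith [sq_nonneg (d + b), sq_nonneg (d + c), sq_nonneg (d - a), sq_nonneg (b - c),
    sq_nonneg (b + a), sq_nonneg (c + a)]

lemma box_all (x y h : ℝ) :
    (box x y h) ^ 2 ≤ 1024 * (min 1 |h|) ^ 2 * (min 1 |y|) ^ 2 *
      (q x + q (x + h) + q (x + y) + q (x + y + h)) := by
  have q1 := q_nonneg x
  have q2 := q_nonneg (x + h)
  have q3 := q_nonneg (x + y)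
  have q4 := q_nonneg (x + y + h)
  rcases le_total |h| 1 with hh | hh <;> rcases le_total |y| 1 with hy | hy
  · rw [min_eq_right hh, min_eq_right hy]
    calc _ = |box x y h| ^ 2 := (sq_abs _).symm
      _ ≤ (32 * |y| * |h| / N x) ^ 2 := by have := box_ss x y h hy hh; gcongr
      _ = 1024 * |h| ^ 2 * |y| ^ 2 * q x := by unfold q; ring
      _ ≤ _ := by gcongr; linarith
  · rw [min_eq_right hh, min_eq_left hy, box_symm]
    calc _ ≤ _ := box_sl x h y hh
      _ ≤ 1024 * h ^ 2 * (q x + q (x + h) + q (x + y) + q (x + y + h)) :=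
        mul_le_mul_of_nonneg_left (by linarith) (by positivity)
      _ = _ := by rw [sq_abs]; ring
  · rw [min_eq_left hh, min_eq_right hy]
    calc _ ≤ _ := box_sl x y h hy
      _ ≤ 1024 * y ^ 2 * (q x + q (x + h) + q (x + y) + q (x + y + h)) :=
        mul_le_mul_of_nonneg_left (by linarith) (by positivity)
      _ = _ := by rw [sq_abs]; ring
  · rw [min_eq_left hh, min_eq_left hy]
    simpa using box_ll x y h

noncomputable def b (a x : ℝ) : ℝ := (N x) ^ a

lemma b_pos (a x : ℝ) : 0 < b a x := Real.rpow_pos_of_pos (N_pos x) a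

lemma q_le (a x : ℝ) (ha : -2 ≤ a) : q x ≤ b a x := by
  have : q x = (N x) ^ (-2 : ℝ) := by
    unfold q
    rw [Real.rpow_neg (N_pos x).le]
    norm_num
  rw [this]
  exact Real.rpow_le_rpow_of_exponent_le (N_one x) ha

lemma w_le (a h : ℝ) (ha : -2 ≤ a) : (min 1 |h|) ^ 2 * |h| ^ a ≤ b a h := by
  rcases le_total |h| 1 with hh | hh
  · rw [min_eq_right hh]
    have : b a h = 1 := by unfold b N; rw [max_eq_left hh, Real.one_rpow]
    rw [this]
    rcases eq_or_ne h 0 with rfl | h0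
    · simp
    · rw [← Real.rpow_natCast, ← Real.rpow_add (abs_pos.mpr h0)]
      exact Real.rpow_le_one (abs_nonneg _) hh (by push_cast; linarith)
  · rw [min_eq_left hh]
    unfold b N
    rw [max_eq_right hh]
    simp

lemma b_half (a x h : ℝ) (ha : -2 ≤ a) (ha' : a ≤ 0) (hN : N x ≤ 2 * N h) :
    b a h ≤ 4 * b a x := by
  unfold b
  have h1 : (N h) ^ a ≤ (N x / 2) ^ a :=
    Real.rpow_le_rpow_of_nonpos (by have := N_pos x; linarith) (by linarith) ha'
  have h2 : (N x / 2) ^ a = (N x) ^ a * (2 : ℝ) ^ (-a) := by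
    rw [Real.div_rpow (N_pos x).le (by norm_num), Real.rpow_neg (by norm_num), div_eq_mul_inv]
  have h3 : (2 : ℝ) ^ (-a) ≤ 4 := by
    calc (2 : ℝ) ^ (-a) ≤ 2 ^ (2 : ℝ) :=
          Real.rpow_le_rpow_of_exponent_le (by norm_num) (by linarith)
      _ = 4 := by norm_num
  have h4 := b_pos a x
  unfold b at h4
  nlinarith

lemma b_mul (a x h : ℝ) (ha : -2 ≤ a) (ha' : a ≤ 0) :
    b a h * b a (x + h) ≤ 4 * b a x * (b a h + b a (x + h)) := by
  have p1 := b_pos a h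
  have p2 := b_pos a (x + h)
  have p3 := b_pos a x
  have : N x ≤ 2 * N h ∨ N x ≤ 2 * N (x + h) := by
    have hx : |x| ≤ |h| + |x + h| := by
      have := abs_sub (x + h) h
      simp only [add_sub_cancel_right] at this
      linarith
    rcases le_total |h| |x + h| with hl | hl
    · right
      exact max_le (by linarith [N_one (x + h)]) (by linarith [N_abs (x + h)])
    · left
      exact max_le (by linarith [N_one h]) (by linarith [N_abs h])
  rcases this with hc | hc
  · have := b_half a x h ha ha' hc
    nlinarith [mul_pos p3 p1]
  · have := b_half a x (x + h) ha ha' hc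
    nlinarith [mul_pos p3 p2]

noncomputable def β (a x : ℝ) : ENNReal := ENNReal.ofReal (b a x)

lemma β_meas (a : ℝ) : Measurable (β a) := by
  unfold β b N
  fun_prop

lemma β_fin (a : ℝ) (ha : -2 ≤ a) (ha' : a < -1) : ∫⁻ x, β a x < ⊤ := by
  have h := integrable_one_add_norm (E := ℝ) (μ := volume) (r := -a) (by simp; linarith)
  have h2 : Integrable (fun x => b a x) := by
    refine (h.const_mul 4).mono' ?_ ?_
    · apply Measurable.aestronglyMeasurable
      unfold b N
      fun_prop
    · refine Filter.Eventually.of_forall fun x => ?_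
      rw [Real.norm_eq_abs, abs_of_pos (b_pos a x), neg_neg]
      have h0 : 0 < 1 + |x| := by positivity
      have e : b a (1 + |x|) = (1 + |x|) ^ a := by
        unfold b N
        rw [abs_of_pos h0, max_eq_right (by linarith [abs_nonneg x])]
      have := b_half a (1 + |x|) x ha (by linarith) (by
        have := N_one x
        have := N_abs x
        apply max_le
        · linarith
        · rw [abs_of_pos h0]; linarith)
      rw [e] at this
      exact this
  exact h2.lintegral_lt_top

lemma β_conv (a x : ℝ) (ha : -2 ≤ a) (ha' : a ≤ 0) :
    ∫⁻ h, β a h * β a (x + h) ≤ 8 * (∫⁻ h, β a h) * β a x := by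
  have hp : ∀ h, β a h * β a (x + h) ≤ 4 * β a x * (β a h + β a (x + h)) := by
    intro h
    have := b_mul a x h ha ha'
    have := ENNReal.ofReal_le_ofReal this
    rw [ENNReal.ofReal_mul (b_pos a h).le, ENNReal.ofReal_mul (by have := b_pos a x; positivity),
      ENNReal.ofReal_mul (by norm_num), ENNReal.ofReal_add (b_pos a h).le (b_pos _ _).le] at this
    simpa [β] using this
  have hm := β_meas a
  calc _ ≤ ∫⁻ h, 4 * β a x * (β a h + β a (x + h)) := lintegral_mono hp
    _ = 4 * β a x * ((∫⁻ h, β a h) + ∫⁻ h, β a (x + h)) := by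
        rw [lintegral_const_mul _ (by fun_prop), lintegral_add_left hm]
    _ = 4 * β a x * ((∫⁻ h, β a h) + ∫⁻ h, β a h) := by
        rw [lintegral_add_left_eq_self (fun h => β a h) x]
    _ = _ := by ring

lemma integrand_le (a x y h : ℝ) (ha : -2 ≤ a) :
    ENNReal.ofReal (|box x y h| ^ 2 * |h| ^ a * |y| ^ a) ≤
      1024 * β a h * (β a y * β a x + β a y * β a (x + h) + β a y * β a (x + y)
        + β a y * β a (x + h + y)) := by
  have h1 := box_all x y h
  have p0 := b_pos a x
  have p1 := b_pos a h
  have p2 := b_pos a y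
  have p3 := b_pos a (x + h)
  have p4 := b_pos a (x + y)
  have p5 := b_pos a (x + h + y)
  have hS : q x + q (x + h) + q (x + y) + q (x + y + h) ≤
      b a x + b a (x + h) + b a (x + y) + b a (x + h + y) := by
    rw [add_right_comm x y h]
    linarith [q_le a x ha, q_le a (x + h) ha, q_le a (x + y) ha, q_le a (x + h + y) ha]
  have key : |box x y h| ^ 2 * |h| ^ a * |y| ^ a ≤ 1024 * b a h * (b a y * b a x
      + b a y * b a (x + h) + b a y * b a (x + y) + b a y * b a (x + h + y)) := by
    rw [sq_abs]
    calc _ ≤ (1024 * (min 1 |h|) ^ 2 * (min 1 |y|) ^ 2 *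
      (q x + q (x + h) + q (x + y) + q (x + y + h))) * |h| ^ a * |y| ^ a := by gcongr
      _ = 1024 * ((min 1 |h|) ^ 2 * |h| ^ a) * (((min 1 |y|) ^ 2 * |y| ^ a) *
        (q x + q (x + h) + q (x + y) + q (x + y + h))) := by ring
      _ ≤ 1024 * b a h * (b a y * (b a x + b a (x + h) + b a (x + y) + b a (x + h + y))) := by
        have := q_nonneg x
        have := q_nonneg (x + h)
        have := q_nonneg (x + y)
        have := q_nonneg (x + y + h)
        have := w_le a h ha
        have := w_le a y ha
        gcongr
      _ = _ := by ring
  have := ENNReal.ofReal_le_ofReal key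
  refine this.trans (le_of_eq ?_)
  unfold β
  rw [ENNReal.ofReal_mul (by positivity), ENNReal.ofReal_mul (by norm_num),
    ENNReal.ofReal_add (by positivity) (by positivity),
    ENNReal.ofReal_add (by positivity) (by positivity),
    ENNReal.ofReal_add (by positivity) (by positivity),
    ENNReal.ofReal_mul p2.le, ENNReal.ofReal_mul p2.le, ENNReal.ofReal_mul p2.le,
    ENNReal.ofReal_mul p2.le]
  simp

lemma inner_le (a x h : ℝ) (ha : -2 ≤ a) (ha' : a ≤ 0) :
    ∫⁻ y, ENNReal.ofReal (|box x y h| ^ 2 * |h| ^ a * |y| ^ a) ≤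
      9216 * (∫⁻ h, β a h) * (β a h * β a x + β a h * β a (x + h)) := by
  have hm := β_meas a
  calc _ ≤ ∫⁻ y, 1024 * β a h * (β a y * β a x + β a y * β a (x + h) + β a y * β a (x + y)
        + β a y * β a (x + h + y)) := lintegral_mono fun y => integrand_le a x y h ha
    _ = 1024 * β a h * ((∫⁻ y, β a y) * β a x + (∫⁻ y, β a y) * β a (x + h)
        + (∫⁻ y, β a y * β a (x + y)) + ∫⁻ y, β a y * β a (x + h + y)) := by
        rw [lintegral_const_mul _ (by fun_prop), lintegral_add_left (by fun_prop),
          lintegral_add_left (by fun_prop), lintegral_add_left (by fun_prop),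
          lintegral_mul_const _ hm, lintegral_mul_const _ hm]
    _ ≤ 1024 * β a h * ((∫⁻ y, β a y) * β a x + (∫⁻ y, β a y) * β a (x + h)
        + 8 * (∫⁻ h, β a h) * β a x + 8 * (∫⁻ h, β a h) * β a (x + h)) := by
        gcongr
        · exact β_conv a x ha ha'
        · exact β_conv a (x + h) ha ha'
    _ = _ := by ring

lemma outer_le (a x : ℝ) (ha : -2 ≤ a) (ha' : a ≤ 0) :
    ∫⁻ h, ∫⁻ y, ENNReal.ofReal (|box x y h| ^ 2 * |h| ^ a * |y| ^ a) ≤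
      82944 * (∫⁻ h, β a h) ^ 2 * β a x := by
  have hm := β_meas a
  calc _ ≤ ∫⁻ h, 9216 * (∫⁻ h, β a h) * (β a h * β a x + β a h * β a (x + h)) :=
        lintegral_mono fun h => inner_le a x h ha ha'
    _ = 9216 * (∫⁻ h, β a h) * ((∫⁻ h, β a h) * β a x + ∫⁻ h, β a h * β a (x + h)) := by
        rw [lintegral_const_mul _ (by fun_prop), lintegral_add_left (by fun_prop),
          lintegral_mul_const _ hm]
    _ ≤ 9216 * (∫⁻ h, β a h) * ((∫⁻ h, β a h) * β a x + 8 * (∫⁻ h, β a h) * β a x) := by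
        gcongr
        exact β_conv a x ha ha'
    _ = _ := by ring

end Stmt8Aux

/-- For `H ∈ (1/4,1/2)`, `□(x,y,h) = e^{-(x+y+h)²} - e^{-(x+h)²} - e^{-(x+y)²} + e^{-x²}`
and `F(x) = ∫∫ |□(x,y,h)|² |h|^{2H-2} |y|^{2H-2} dy dh`, one has
`F(x) ≤ C · min(1, |x|^{2H-2})` (written as `(max 1 |x|)^{2H-2}`). -/
theorem stmt8 (H : ℝ) (hH : H ∈ Set.Ioo (1 / 4 : ℝ) (1 / 2)) :
    ∃ C : ℝ, 0 < C ∧ ∀ x : ℝ,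
      (∫⁻ h : ℝ, ∫⁻ y : ℝ, ENNReal.ofReal
          (|Real.exp (-(x + y + h) ^ 2) - Real.exp (-(x + h) ^ 2)
              - Real.exp (-(x + y) ^ 2) + Real.exp (-x ^ 2)| ^ 2
            * |h| ^ (2 * H - 2) * |y| ^ (2 * H - 2)))
        ≤ ENNReal.ofReal (C * (max 1 |x|) ^ (2 * H - 2)) := by
  obtain ⟨h1, h2⟩ := hH
  have ha : -2 ≤ 2 * H - 2 := by linarith
  have ha' : 2 * H - 2 < -1 := by linarith
  have hfin := Stmt8Aux.β_fin _ ha ha'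
  set B := ∫⁻ x, Stmt8Aux.β (2 * H - 2) x with hB
  refine ⟨82944 * B.toReal ^ 2 + 1, by positivity, fun x => ?_⟩
  have key := Stmt8Aux.outer_le (2 * H - 2) x ha (by linarith)
  refine key.trans ?_
  rw [← hB, ENNReal.ofReal_mul (by positivity)]
  change _ ≤ _ * Stmt8Aux.β (2 * H - 2) x
  gcongr
  rw [ENNReal.ofReal_add (by positivity) (by norm_num), ENNReal.ofReal_mul (by norm_num),
    ENNReal.ofReal_pow ENNReal.toReal_nonneg, ENNReal.ofReal_toReal hfin.ne]
  simp
end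

section
/- Fix 1/4 < H < 1/2, let λ(x) = (1+|x|^2)^{H-1}, and let D_t(x,h) = G_t(x+h) - G_t(x) with G_t the heat kernel. Then for every T > 0 there is a constant C depending only on T and H such that for all t ∈ (0,T] and all z ∈ ℝ: ∫_ℝ ∫_ℝ |D_t(x,h)|^2 |h|^{2H-2} λ(z-x) dx dh ≤ C t^{H-1} λ(z). -/
open MeasureTheory Real Set

lemma aux_exp_lt (a b : ℝ) (hab : a ^ 2 ≤ b ^ 2) :
    (exp (-a ^ 2) - exp (-b ^ 2)) ^ 2
      ≤ 8 * min 1 ((a - b) ^ 2) * (exp (-a ^ 2) + exp (-b ^ 2)) := by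
  have e1 : 0 < exp (-a ^ 2) := exp_pos _
  have e2 : 0 < exp (-b ^ 2) := exp_pos _
  have e3 : exp (-b ^ 2) ≤ exp (-a ^ 2) := exp_le_exp.2 (by linarith)
  have e4 : exp (-a ^ 2) ≤ 1 := exp_le_one_iff.2 (by nlinarith [sq_nonneg a])
  have e5 : exp (-a ^ 2) * (1 + a ^ 2) ≤ 1 := by
    have := add_one_le_exp (a ^ 2)
    have h2 : exp (-a ^ 2) * exp (a ^ 2) = 1 := by rw [← exp_add]; simp
    nlinarith
  have e6 : exp (-a ^ 2) - exp (-b ^ 2) ≤ exp (-a ^ 2) * (b ^ 2 - a ^ 2) := by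
    have := add_one_le_exp (a ^ 2 - b ^ 2)
    have h2 : exp (-b ^ 2) = exp (-a ^ 2) * exp (a ^ 2 - b ^ 2) := by rw [← exp_add]; ring_nf
    rw [h2]; nlinarith
  rcases le_total 1 ((a - b) ^ 2) with h | h
  · rw [min_eq_left h]
    nlinarith
  · rw [min_eq_right h]
    have h1 : (exp (-a ^ 2) - exp (-b ^ 2)) ^ 2 ≤ (exp (-a ^ 2) * (b ^ 2 - a ^ 2)) ^ 2 :=
      pow_le_pow_left₀ (by linarith) e6 2
    have h2 : (a + b) ^ 2 ≤ 8 * (1 + a ^ 2) := by nlinarith [sq_nonneg (3 * a - b)]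
    have h3 : exp (-a ^ 2) * (a + b) ^ 2 ≤ 8 := by nlinarith
    have h4 : (exp (-a ^ 2) * (b ^ 2 - a ^ 2)) ^ 2
        = (a - b) ^ 2 * exp (-a ^ 2) * (exp (-a ^ 2) * (a + b) ^ 2) := by ring
    have h5 : 0 ≤ (a - b) ^ 2 * exp (-a ^ 2) := by positivity
    have h6 : 0 ≤ (a - b) ^ 2 * exp (-b ^ 2) := by positivity
    nlinarith

lemma aux_exp (a b : ℝ) :
    (exp (-a ^ 2) - exp (-b ^ 2)) ^ 2
      ≤ 8 * min 1 ((a - b) ^ 2) * (exp (-a ^ 2) + exp (-b ^ 2)) := by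
  rcases le_total (a ^ 2) (b ^ 2) with h | h
  · exact aux_exp_lt a b h
  · have := aux_exp_lt b a h
    have e : (b - a) ^ 2 = (a - b) ^ 2 := by ring
    rw [e] at this
    linarith [sq_nonneg (exp (-b ^ 2) - exp (-a ^ 2))]

lemma aux_w (H t h : ℝ) (hH0 : 0 < H) (hH1 : H < 1) (ht : 0 < t) :
    min 1 (h ^ 2 / (4 * t)) * |h| ^ (2 * H - 2) ≤ 2 ^ (1 - H) * (t + h ^ 2) ^ (H - 1) := by
  rcases eq_or_ne h 0 with rfl | hne
  · simp only [ne_eq, OfNat.ofNat_ne_zero, not_false_eq_true, zero_pow, zero_div, zero_le_one,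
      min_eq_right, zero_mul, add_zero]
    positivity
  have hh : 0 < h ^ 2 := by positivity
  have e1 : |h| ^ (2 * H - 2) = (h ^ 2) ^ (H - 1) := by
    rw [← sq_abs, ← rpow_natCast, ← rpow_mul (abs_nonneg h)]
    congr 1; push_cast; ring
  have e2 : ∀ u : ℝ, 0 < u → t + h ^ 2 ≤ 2 * u →
      u ^ (H - 1) ≤ 2 ^ (1 - H) * (t + h ^ 2) ^ (H - 1) := by
    intro u hu hle
    have h1 : (2 * u) ^ (H - 1) ≤ (t + h ^ 2) ^ (H - 1) :=
      rpow_le_rpow_of_nonpos (by positivity) hle (by linarith)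
    rw [mul_rpow (by norm_num) hu.le] at h1
    have h2 : (2 : ℝ) ^ (1 - H) * 2 ^ (H - 1) = 1 := by
      rw [← rpow_add (by norm_num)]; simp
    calc u ^ (H - 1) = 2 ^ (1 - H) * (2 ^ (H - 1) * u ^ (H - 1)) := by
          rw [← mul_assoc, h2, one_mul]
      _ ≤ _ := by gcongr
  rw [e1]
  rcases le_total (h ^ 2) t with hc | hc
  · refine le_trans ?_ (e2 t ht (by linarith))
    have h1 : (h ^ 2) ^ (H - 1) * h ^ 2 ≤ t ^ (H - 1) * t := by
      rw [← rpow_add_one hh.ne', ← rpow_add_one ht.ne']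
      simp only [sub_add_cancel]
      exact rpow_le_rpow hh.le hc hH0.le
    have h2 : min 1 (h ^ 2 / (4 * t)) ≤ h ^ 2 / t := by
      refine (min_le_right _ _).trans ?_
      gcongr; linarith
    calc _ ≤ h ^ 2 / t * (h ^ 2) ^ (H - 1) := by gcongr
      _ = (h ^ 2) ^ (H - 1) * h ^ 2 / t := by ring
      _ ≤ t ^ (H - 1) * t / t := by gcongr
      _ = _ := by field_simp
  · refine le_trans ?_ (e2 (h ^ 2) hh (by linarith))
    calc _ ≤ 1 * (h ^ 2) ^ (H - 1) := by gcongr; exact min_le_left _ _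
      _ = _ := one_mul _

/-- pointwise bound of the squared kernel increment -/
lemma aux_D (t x h : ℝ) (ht : 0 < t) :
    |heatKernel t (x + h) - heatKernel t x| ^ 2
      ≤ t⁻¹ * min 1 (h ^ 2 / (4 * t)) * (exp (-x ^ 2 / (4 * t)) + exp (-(x + h) ^ 2 / (4 * t))) := by
  have hs : (2 * √t) ^ 2 = 4 * t := by rw [mul_pow, sq_sqrt ht.le]; norm_num
  have := aux_exp ((x + h) / (2 * √t)) (x / (2 * √t))
  rw [← sub_div, div_pow, div_pow, div_pow, hs] at this
  simp only [add_sub_cancel_left, ← neg_div] at this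
  have hp : (√(4 * π * t))⁻¹ ^ 2 * 8 ≤ t⁻¹ := by
    rw [inv_pow, sq_sqrt (by positivity), mul_inv, mul_inv]
    have : π⁻¹ * 2 ≤ 1 := by
      rw [inv_mul_le_iff₀ pi_pos]; linarith [pi_gt_three]
    have h0 : 0 < t⁻¹ := by positivity
    nlinarith
  rw [sq_abs]
  unfold heatKernel
  rw [← mul_sub, mul_pow]
  set M := min 1 (h ^ 2 / (4 * t)) with hM
  have hM0 : 0 ≤ M := by rw [hM]; positivity
  calc _ ≤ (√(4 * π * t))⁻¹ ^ 2 * (8 * M * (exp (-(x + h) ^ 2 / (4 * t)) + exp (-x ^ 2 / (4 * t)))) := by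
        gcongr
    _ = ((√(4 * π * t))⁻¹ ^ 2 * 8) * M * (exp (-x ^ 2 / (4 * t)) + exp (-(x + h) ^ 2 / (4 * t))) := by ring
    _ ≤ _ := by gcongr

lemma aux_peetre (H z x : ℝ) (hH0 : 0 < H) (hH1 : H < 1) :
    (1 + (z - x) ^ 2) ^ (H - 1) ≤ 2 * (1 + x ^ 2) * (1 + z ^ 2) ^ (H - 1) := by
  have h1 : 1 + z ^ 2 ≤ (2 * (1 + x ^ 2)) * (1 + (z - x) ^ 2) := by
    nlinarith [sq_nonneg (z - 2 * x), sq_nonneg (x * (z - x))]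
  have h2 : ((2 * (1 + x ^ 2)) * (1 + (z - x) ^ 2)) ^ (H - 1) ≤ (1 + z ^ 2) ^ (H - 1) :=
    rpow_le_rpow_of_nonpos (by positivity) h1 (by linarith)
  rw [mul_rpow (by positivity) (by positivity)] at h2
  have hu : 1 ≤ 2 * (1 + x ^ 2) := by nlinarith [sq_nonneg x]
  have h3 : (2 * (1 + x ^ 2)) ^ (1 - H) ≤ 2 * (1 + x ^ 2) := by
    calc _ ≤ (2 * (1 + x ^ 2)) ^ (1 : ℝ) := rpow_le_rpow_of_exponent_le hu (by linarith)
      _ = _ := rpow_one _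
  have h4 : (2 * (1 + x ^ 2)) ^ (1 - H) * (2 * (1 + x ^ 2)) ^ (H - 1) = 1 := by
    rw [← rpow_add (by positivity)]; simp
  calc (1 + (z - x) ^ 2) ^ (H - 1)
      = (2 * (1 + x ^ 2)) ^ (1 - H) * ((2 * (1 + x ^ 2)) ^ (H - 1) * (1 + (z - x) ^ 2) ^ (H - 1)) := by
        rw [← mul_assoc, h4, one_mul]
    _ ≤ (2 * (1 + x ^ 2)) * (1 + z ^ 2) ^ (H - 1) := by gcongr

lemma aux_gauss_s9 (t T x : ℝ) (ht : 0 < t) (hT : t ≤ T) :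
    exp (-x ^ 2 / (4 * t)) * (1 + x ^ 2) ≤ (1 + 8 * T) * exp (-(1 / (8 * t)) * x ^ 2) := by
  have e : exp (-x ^ 2 / (4 * t)) = exp (-(1 / (8 * t)) * x ^ 2) * exp (-(1 / (8 * t)) * x ^ 2) := by
    rw [← exp_add]; congr 1; field_simp; ring
  have h1 : exp (-(1 / (8 * t)) * x ^ 2) * (1 + x ^ 2) ≤ 1 + 8 * T := by
    have h2 := add_one_le_exp ((1 / (8 * t)) * x ^ 2)
    have h3 : exp (-(1 / (8 * t)) * x ^ 2) * exp ((1 / (8 * t)) * x ^ 2) = 1 := by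
      rw [← exp_add]; simp
    have h4 : 1 + x ^ 2 ≤ (1 + 8 * T) * exp ((1 / (8 * t)) * x ^ 2) := by
      have h5 : x ^ 2 ≤ 8 * T * ((1 / (8 * t)) * x ^ 2) := by
        have : 8 * T * ((1 / (8 * t)) * x ^ 2) = (T / t) * x ^ 2 := by field_simp
        rw [this]
        have : 1 ≤ T / t := by rwa [le_div_iff₀ ht, one_mul]
        nlinarith [sq_nonneg x]
      have h6 : 0 ≤ (1 / (8 * t)) * x ^ 2 := by positivity
      nlinarith
    calc _ ≤ exp (-(1 / (8 * t)) * x ^ 2) * ((1 + 8 * T) * exp ((1 / (8 * t)) * x ^ 2)) := by gcongr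
      _ = (1 + 8 * T) * (exp (-(1 / (8 * t)) * x ^ 2) * exp ((1 / (8 * t)) * x ^ 2)) := by ring
      _ = _ := by rw [h3, mul_one]
  rw [e, mul_assoc, mul_comm (1 + 8 * T)]
  gcongr

lemma aux_inner (H t T z : ℝ) (hH0 : 0 < H) (hH1 : H < 1) (ht : 0 < t) (hT : t ≤ T) :
    ∫⁻ x : ℝ, ENNReal.ofReal (exp (-x ^ 2 / (4 * t)) * (1 + (z - x) ^ 2) ^ (H - 1))
      ≤ ENNReal.ofReal (2 * (1 + 8 * T) * √(8 * π) * √t * (1 + z ^ 2) ^ (H - 1)) := by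
  have hT0 : 0 < T := ht.trans_le hT
  have hb : 0 < 1 / (8 * t) := by positivity
  have hint := (integrable_exp_neg_mul_sq hb).const_mul (2 * (1 + 8 * T) * (1 + z ^ 2) ^ (H - 1))
  calc _ ≤ ∫⁻ x : ℝ, ENNReal.ofReal
        (2 * (1 + 8 * T) * (1 + z ^ 2) ^ (H - 1) * exp (-(1 / (8 * t)) * x ^ 2)) := by
        refine lintegral_mono fun x => ENNReal.ofReal_le_ofReal ?_
        have h1 := aux_peetre H z x hH0 hH1
        have h2 := aux_gauss_s9 t T x ht hT
        calc _ ≤ exp (-x ^ 2 / (4 * t)) * (2 * (1 + x ^ 2) * (1 + z ^ 2) ^ (H - 1)) := by gcongr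
          _ = 2 * (1 + z ^ 2) ^ (H - 1) * (exp (-x ^ 2 / (4 * t)) * (1 + x ^ 2)) := by ring
          _ ≤ 2 * (1 + z ^ 2) ^ (H - 1) * ((1 + 8 * T) * exp (-(1 / (8 * t)) * x ^ 2)) := by gcongr
          _ = _ := by ring
    _ = _ := by
        rw [← ofReal_integral_eq_lintegral_ofReal hint (ae_of_all _ fun x => by positivity),
          integral_const_mul, integral_gaussian]
        congr 1
        have : √(π / (1 / (8 * t))) = √(8 * π) * √t := by
          rw [← sqrt_mul (by positivity)]; congr 1; field_simp
        rw [this]; ring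

lemma aux_conv (H t z h : ℝ) (hH1 : H < 1) (ht : 0 < t) :
    (t + h ^ 2) ^ (H - 1) * (1 + (z + h) ^ 2) ^ (H - 1)
      ≤ 4 ^ (1 - H) * (1 + z ^ 2) ^ (H - 1)
        * ((t + h ^ 2) ^ (H - 1) + (1 + (z + h) ^ 2) ^ (H - 1)) := by
  have e2 : ∀ u : ℝ, 0 < u → 1 + z ^ 2 ≤ 4 * u →
      u ^ (H - 1) ≤ 4 ^ (1 - H) * (1 + z ^ 2) ^ (H - 1) := by
    intro u hu hle
    have h1 : (4 * u) ^ (H - 1) ≤ (1 + z ^ 2) ^ (H - 1) :=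
      rpow_le_rpow_of_nonpos (by positivity) hle (by linarith)
    rw [mul_rpow (by norm_num) hu.le] at h1
    have h2 : (4 : ℝ) ^ (1 - H) * 4 ^ (H - 1) = 1 := by
      rw [← rpow_add (by norm_num)]; simp
    calc u ^ (H - 1) = 4 ^ (1 - H) * (4 ^ (H - 1) * u ^ (H - 1)) := by
          rw [← mul_assoc, h2, one_mul]
      _ ≤ _ := by gcongr
  have p1 : 0 < (t + h ^ 2) ^ (H - 1) := by positivity
  have p2 : 0 < (1 + (z + h) ^ 2) ^ (H - 1) := by positivity
  have p3 : 0 < 4 ^ (1 - H) * (1 + z ^ 2) ^ (H - 1) := by positivity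
  rcases le_total (1 + z ^ 2) (4 * (1 + (z + h) ^ 2)) with hc | hc
  · have := e2 _ (by positivity) hc
    nlinarith [mul_pos p3 p2]
  · have := e2 (t + h ^ 2) (by positivity) (by nlinarith [sq_nonneg (z + 2 * h)])
    nlinarith [mul_pos p3 p1]

lemma aux_int1 (H : ℝ) (hH1 : H < 1 / 2) : Integrable (fun x : ℝ => (1 + x ^ 2) ^ (H - 1)) := by
  have := integrable_rpow_neg_one_add_norm_sq (E := ℝ) (μ := volume) (r := 2 - 2 * H)
    (by simp; linarith)
  refine this.congr (ae_of_all _ fun x => ?_)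
  simp only [norm_eq_abs, sq_abs]
  congr 1; ring

lemma aux_scale_s9 (H t x : ℝ) (ht : 0 < t) :
    (t + x ^ 2) ^ (H - 1) = t ^ (H - 1) * (1 + (x / √t) ^ 2) ^ (H - 1) := by
  rw [← mul_rpow ht.le (by positivity), div_pow, sq_sqrt ht.le]
  congr 1; field_simp

/-- Weighted first-order fractional energy bound for the heat kernel increment:
for `H ∈ (1/4,1/2)`, `λ(x) = (1+|x|²)^{H-1}`, and all `t ∈ (0,T]`, `z ∈ ℝ`,
`∫∫ |D_t(x,h)|² |h|^{2H-2} λ(z-x) dx dh ≤ C t^{H-1} λ(z)`. -/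
theorem stmt9 (H : ℝ) (hH : H ∈ Set.Ioo (1 / 4 : ℝ) (1 / 2)) (T : ℝ) (hT : 0 < T) :
    ∃ C : ℝ, 0 < C ∧ ∀ t ∈ Set.Ioc (0 : ℝ) T, ∀ z : ℝ,
      (∫⁻ h : ℝ, ∫⁻ x : ℝ, ENNReal.ofReal
          (|heatKernel t (x + h) - heatKernel t x| ^ 2 * |h| ^ (2 * H - 2)
            * (1 + |z - x| ^ 2) ^ (H - 1)))
        ≤ ENNReal.ofReal (C * t ^ (H - 1) * (1 + |z| ^ 2) ^ (H - 1)) := by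
  obtain ⟨hH0, hH1⟩ := hH
  have hHp : 0 < H := by linarith
  have hHl : H < 1 := by linarith
  set L : ℝ := ∫ x : ℝ, (1 + x ^ 2) ^ (H - 1) with hL
  have hL0 : 0 ≤ L := integral_nonneg fun x => by positivity
  set B : ℝ := 2 ^ (1 - H) * (2 * (1 + 8 * T) * √(8 * π)) with hB
  have hBp : 0 < B := by positivity
  set F : ℝ := 4 ^ (1 - H) with hF
  have hFp : 0 < F := by positivity
  refine ⟨B * ((1 + F) * L + F * L * T ^ (1 / 2 - H)) + 1, by positivity, ?_⟩
  rintro t ⟨ht, htT⟩ z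
  simp only [sq_abs]
  have hst : 0 < √t := sqrt_pos.2 ht
  have inner : ∀ h : ℝ, (∫⁻ x : ℝ, ENNReal.ofReal
          (|heatKernel t (x + h) - heatKernel t x| ^ 2 * |h| ^ (2 * H - 2)
            * (1 + (z - x) ^ 2) ^ (H - 1)))
      ≤ ENNReal.ofReal (B * (√t)⁻¹ * (1 + z ^ 2) ^ (H - 1) *
          ((1 + F) * (t + h ^ 2) ^ (H - 1) + F * (1 + (z + h) ^ 2) ^ (H - 1))) := by
    intro h
    set V := (t + h ^ 2) ^ (H - 1) with hV
    have hV0 : 0 < V := by positivity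
    have hk : 0 ≤ t⁻¹ * (2 ^ (1 - H) * V) := by positivity
    have hT8 : 0 ≤ 2 * (1 + 8 * T) * √(8 * π) * √t := by positivity
    calc _ ≤ ∫⁻ x : ℝ, (ENNReal.ofReal (t⁻¹ * (2 ^ (1 - H) * V)) *
            (ENNReal.ofReal (exp (-x ^ 2 / (4 * t)) * (1 + (z - x) ^ 2) ^ (H - 1))
            + ENNReal.ofReal (exp (-(x + h) ^ 2 / (4 * t)) * (1 + (z + h - (x + h)) ^ 2) ^ (H - 1)))) := by
          refine lintegral_mono fun x => ?_
          rw [← ENNReal.ofReal_add (by positivity) (by positivity), ← ENNReal.ofReal_mul hk]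
          refine ENNReal.ofReal_le_ofReal ?_
          have h1 := aux_D t x h ht
          have h2 := aux_w H t h hHp hHl ht
          have h3 : z + h - (x + h) = z - x := by ring
          rw [h3]
          set e := exp (-x ^ 2 / (4 * t)) + exp (-(x + h) ^ 2 / (4 * t)) with he
          have he0 : 0 ≤ e := by positivity
          calc _ ≤ (t⁻¹ * min 1 (h ^ 2 / (4 * t)) * e) * |h| ^ (2 * H - 2)
                  * (1 + (z - x) ^ 2) ^ (H - 1) := by gcongr
            _ = t⁻¹ * (min 1 (h ^ 2 / (4 * t)) * |h| ^ (2 * H - 2)) * e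
                  * (1 + (z - x) ^ 2) ^ (H - 1) := by ring
            _ ≤ t⁻¹ * (2 ^ (1 - H) * V) * e * (1 + (z - x) ^ 2) ^ (H - 1) := by gcongr
            _ = _ := by rw [he]; ring
      _ = ENNReal.ofReal (t⁻¹ * (2 ^ (1 - H) * V)) *
            ((∫⁻ x : ℝ, ENNReal.ofReal (exp (-x ^ 2 / (4 * t)) * (1 + (z - x) ^ 2) ^ (H - 1)))
            + ∫⁻ x : ℝ, ENNReal.ofReal (exp (-x ^ 2 / (4 * t)) * (1 + (z + h - x) ^ 2) ^ (H - 1))) := by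
          rw [lintegral_const_mul _ (by fun_prop), lintegral_add_left (by fun_prop)]
          congr 2
          exact lintegral_add_right_eq_self (fun x : ℝ => ENNReal.ofReal
            (exp (-x ^ 2 / (4 * t)) * (1 + (z + h - x) ^ 2) ^ (H - 1))) h
      _ ≤ ENNReal.ofReal (t⁻¹ * (2 ^ (1 - H) * V)) *
            (ENNReal.ofReal (2 * (1 + 8 * T) * √(8 * π) * √t * (1 + z ^ 2) ^ (H - 1))
            + ENNReal.ofReal (2 * (1 + 8 * T) * √(8 * π) * √t * (1 + (z + h) ^ 2) ^ (H - 1))) := by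
          gcongr
          · exact aux_inner H t T z hHp hHl ht htT
          · exact aux_inner H t T (z + h) hHp hHl ht htT
      _ ≤ _ := by
          rw [← ENNReal.ofReal_add (by positivity) (by positivity), ← ENNReal.ofReal_mul hk]
          refine ENNReal.ofReal_le_ofReal ?_
          have h1 := aux_conv H t z h hHl ht
          have h2 : t⁻¹ * √t = (√t)⁻¹ := by
            have := mul_self_sqrt ht.le
            field_simp; nlinarith
          calc _ = B * (t⁻¹ * √t) * (V * (1 + z ^ 2) ^ (H - 1) + V * (1 + (z + h) ^ 2) ^ (H - 1)) := by
                rw [hB]; ring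
            _ ≤ B * (t⁻¹ * √t) * (V * (1 + z ^ 2) ^ (H - 1) + F * (1 + z ^ 2) ^ (H - 1)
                  * (V + (1 + (z + h) ^ 2) ^ (H - 1))) := by gcongr
            _ = _ := by rw [h2]; ring
  simp only [sq_abs] at inner
  refine (lintegral_mono inner).trans ?_
  have i1 := aux_int1 H hH1
  have i2 : Integrable (fun h : ℝ => (1 + (z + h) ^ 2) ^ (H - 1)) := i1.comp_add_left z
  have i3 : Integrable (fun h : ℝ => (t + h ^ 2) ^ (H - 1)) := by
    simp only [aux_scale_s9 H t _ ht]
    exact (i1.comp_div hst.ne').const_mul _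
  have v2 : ∫ h : ℝ, (1 + (z + h) ^ 2) ^ (H - 1) = L :=
    integral_add_left_eq_self (fun h : ℝ => (1 + h ^ 2) ^ (H - 1)) z
  have v3 : ∫ h : ℝ, (t + h ^ 2) ^ (H - 1) = t ^ (H - 1) * (√t * L) := by
    simp only [aux_scale_s9 H t _ ht]
    rw [integral_const_mul, Measure.integral_comp_div (fun x : ℝ => (1 + x ^ 2) ^ (H - 1)),
      abs_of_pos hst, smul_eq_mul]
  have i4 : Integrable (fun a : ℝ => B * (√t)⁻¹ * (1 + z ^ 2) ^ (H - 1) *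
      ((1 + F) * (t + a ^ 2) ^ (H - 1) + F * (1 + (z + a) ^ 2) ^ (H - 1))) :=
    ((i3.const_mul _).add (i2.const_mul _)).const_mul _
  rw [← ofReal_integral_eq_lintegral_ofReal
      i4 (ae_of_all _ fun x => by positivity),
    integral_const_mul, integral_add (i3.const_mul _) (i2.const_mul _), integral_const_mul,
    integral_const_mul, v2, v3]
  refine ENNReal.ofReal_le_ofReal ?_
  have k1 : (√t)⁻¹ ≤ t ^ (H - 1) * T ^ (1 / 2 - H) := by
    have : (√t)⁻¹ = t ^ (H - 1) * t ^ (1 / 2 - H) := by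
      rw [sqrt_eq_rpow, ← rpow_neg ht.le, ← rpow_add ht]; congr 1; ring
    rw [this]
    gcongr
  set Z := (1 + z ^ 2) ^ (H - 1) with hZ
  have hZ0 : 0 < Z := by positivity
  have hP : 0 < t ^ (H - 1) := by positivity
  calc _ = B * Z * ((1 + F) * L * t ^ (H - 1) * ((√t)⁻¹ * √t) + F * L * (√t)⁻¹) := by ring
    _ ≤ B * Z * ((1 + F) * L * t ^ (H - 1) * ((√t)⁻¹ * √t)
          + F * L * (t ^ (H - 1) * T ^ (1 / 2 - H))) := by gcongr
    _ = (B * ((1 + F) * L + F * L * T ^ (1 / 2 - H))) * t ^ (H - 1) * Z := by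
        rw [inv_mul_cancel₀ hst.ne']; ring
    _ ≤ _ := by gcongr; linarith
end
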